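/- arXiv:1708.03010 — 2 statements merged into one kernel-verified Lean document; each statement's English description precedes it below -/
import Mathlib

section
/- Let (R, 𝔪) be a regular local ring and let 𝔭 ⊆ 𝔪 be a prime ideal of R. Then for every positive integer n, the n-th symbolic power of 𝔭 is contained in the n-th power of the maximal ideal: 𝔭^{(n)} ⊆ 𝔪^n. -/
/-- The `n`-th symbolic power of a prime ideal `P`:
`P^{(n)} = P^n R_P ∩ R`, the preimage in `R` of `P^n R_P` under the localization map. -/
noncomputable def symbolicPower {R : Type*} [CommRing R] (P : Ideal R) [P.IsPrime] (n : ℕ) :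
    Ideal R :=
  (Ideal.map (algebraMap R (Localization.AtPrime P)) (P ^ n)).comap
    (algebraMap R (Localization.AtPrime P))

/-- A (Noetherian) local ring is regular if its maximal ideal can be generated
by `dim R` elements. -/
def IsRegularLocal (R : Type*) [CommRing R] [IsLocalRing R] : Prop :=
  IsNoetherianRing R ∧
    ∃ s : Finset R, Ideal.span (s : Set R) = IsLocalRing.maximalIdeal R ∧
      (s.card : WithBot (WithTop ℕ)) = ringKrullDim R


open MvPolynomial in
lemma ZN.exists_homog {B : Type*} [CommRing B] {ι : Type*} (z : ι → B) (I : Ideal B) (n : ℕ)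
    (y : B) (hy : y ∈ I * Ideal.span (Set.range z) ^ n) :
    ∃ p : MvPolynomial ι B, p.IsHomogeneous n ∧ (∀ a, coeff a p ∈ I) ∧ eval z p = y := by
  induction hy using Submodule.mul_induction_on' with
  | mem_mul_mem a ha b hb =>
    obtain ⟨p, hp, rfl⟩ := (Ideal.mem_span_pow_iff_exists_isHomogeneous z b).1 hb
    refine ⟨C a * p, by simpa using (isHomogeneous_C ι a).mul hp, fun c => ?_, by simp⟩
    rw [coeff_C_mul]
    exact I.mul_mem_right _ ha
  | add x _ y _ hx hy =>
    obtain ⟨p, hp, hp', rfl⟩ := hx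
    obtain ⟨q, hq, hq', rfl⟩ := hy
    exact ⟨p + q, hp.add hq, fun a => by rw [coeff_add]; exact I.add_mem (hp' a) (hq' a), by simp⟩

open MvPolynomial in
lemma ZN.eval_mem {B : Type*} [CommRing B] {ι : Type*} (z : ι → B) (I J : Ideal B) (n : ℕ)
    (hz : ∀ i, z i ∈ J)
    (p : MvPolynomial ι B) (hp : p.IsHomogeneous n) (hI : ∀ a, coeff a p ∈ I) :
    eval z p ∈ I * J ^ n := by
  classical
  rw [eval_eq]
  refine Ideal.sum_mem _ fun d hd => ?_
  refine Ideal.mul_mem_mul (hI d) ?_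
  have h1 : d.degree = n := by
    have := hp (mem_support_iff.1 hd)
    rw [Finsupp.degree_eq_weight_one (R := ℕ)]
    exact this
  have h2 : ∏ i ∈ d.support, z i ^ d i ∈ ∏ i ∈ d.support, J ^ d i :=
    Ideal.prod_mem_prod fun i _ => Ideal.pow_mem_pow (hz i) _
  rw [Finset.prod_pow_eq_pow_sum] at h2
  rwa [← h1]

open MvPolynomial in
lemma ZN.eval₂_scale {B S : Type*} [CommRing B] [CommRing S] {ι : Type*} {n : ℕ}
    (p : MvPolynomial ι B) (hp : p.IsHomogeneous n) (f : B →+* S) (c : S) (g : ι → S) :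
    eval₂ f (fun i => c * g i) p = c ^ n * eval₂ f g p := by
  classical
  rw [eval₂_eq, eval₂_eq, Finset.mul_sum]
  refine Finset.sum_congr rfl fun d hd => ?_
  have h1 : d.degree = n := by
    have := hp (mem_support_iff.1 hd)
    rw [Finsupp.degree_eq_weight_one (R := ℕ)]
    exact this
  simp_rw [mul_pow, Finset.prod_mul_distrib]
  rw [Finset.prod_pow_eq_pow_sum, ← h1]
  change _ * (c ^ (∑ i ∈ d.support, d i) * _) = c ^ (∑ i ∈ d.support, d i) * _
  ring

lemma ZN.height_map_C {B : Type*} [CommRing B] [IsNoetherianRing B] {σ : Type*} [Finite σ]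
    (p : Ideal B) [p.IsPrime] [(p.map (MvPolynomial.C (σ := σ))).IsPrime] :
    p.height ≤ (p.map (MvPolynomial.C (σ := σ))).height := by
  have : (p.map (MvPolynomial.C (σ := σ))).LiesOver p := by
    constructor
    ext x
    rw [Ideal.mem_comap, MvPolynomial.algebraMap_eq, MvPolynomial.mem_map_C_iff]
    classical
    constructor
    · intro hx m
      rw [MvPolynomial.coeff_C]; split_ifs <;> simp [hx]
    · intro h
      simpa using h 0
  rw [Ideal.height_eq_height_add_of_liesOver_of_hasGoingDown p
    (p.map (MvPolynomial.C (σ := σ)))]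
  exact le_self_add

open MvPolynomial IsLocalRing in
lemma ZN.quasiReg_local {B : Type*} [CommRing B] [IsLocalRing B] [IsNoetherianRing B]
    {ι : Type*} [Finite ι] (z : ι → B) (hz : Ideal.span (Set.range z) = maximalIdeal B)
    (hd : (Nat.card ι : ℕ∞) ≤ (maximalIdeal B).height) {n : ℕ} (F : MvPolynomial ι B)
    (hF : F.IsHomogeneous n) (h : eval z F ∈ maximalIdeal B ^ (n + 1)) (a : ι →₀ ℕ) :
    coeff a F ∈ maximalIdeal B := by
  classical
  have := Fintype.ofFinite ι
  by_contra hcon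
  obtain ⟨G, hG, hG', hGF⟩ := ZN.exists_homog z (maximalIdeal B) n (eval z F)
    (by rwa [hz, ← pow_succ'])
  have hF' : (F - G).IsHomogeneous n := hF.sub hG
  have h0 : eval z (F - G) = 0 := by simp [hGF]
  have hc : coeff a (F - G) ∉ maximalIdeal B := by
    rw [coeff_sub]
    intro hh
    exact hcon (by simpa using Ideal.add_mem _ hh (hG' a))
  generalize F - G = F' at hF' h0 hc
  clear hG hG' hGF G h hcon hF F
  have hpr : ((maximalIdeal B).map (C (σ := ι))).IsPrime := by
    have e := (quotientEquivQuotientMvPolynomial (σ := ι) (maximalIdeal B)).toRingEquiv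
    rw [← Ideal.Quotient.isDomain_iff_prime]
    exact e.symm.toMulEquiv.isDomain _
  rcases isEmpty_or_nonempty ι with he | ⟨⟨i0⟩⟩
  · rw [eq_C_of_isEmpty F', eval_C] at h0
    apply hc
    rw [Subsingleton.elim a 0, h0]
    simp
  set 𝔐 := (maximalIdeal B).map (C (σ := ι)) with h𝔐
  have hX : (X i0 : MvPolynomial ι B) ∉ 𝔐 := by
    rw [h𝔐, mem_map_C_iff]
    intro h
    have := h (Finsupp.single i0 1)
    simp at this
  have hFM : F' ∉ 𝔐 := by
    rw [h𝔐, mem_map_C_iff]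
    exact fun h => hc (h a)
  let s : Finset (MvPolynomial ι B) :=
    (Finset.univ.erase i0).image fun i => X i0 * C (z i) - X i * C (z i0)
  have hs : ∀ i, X i0 * C (z i) - X i * C (z i0) ∈ Ideal.span (s : Set (MvPolynomial ι B)) := by
    intro i
    by_cases hi : i = i0
    · subst hi; simp
    · apply Ideal.subset_span
      simp only [s, Finset.coe_image]
      exact ⟨i, by simp [hi], rfl⟩
  have hCz : ∀ i, C (z i) ∈ 𝔐 := fun i =>
    Ideal.mem_map_of_mem _ (hz ▸ Ideal.subset_span ⟨i, rfl⟩)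
  have key : F' * C (z i0) ^ n ∈ Ideal.span (s : Set (MvPolynomial ι B)) := by
    rw [← Ideal.Quotient.eq_zero_iff_mem]
    set q := Ideal.Quotient.mk (Ideal.span (s : Set (MvPolynomial ι B)))
    have hq : ∀ i, q (X i0) * q (C (z i)) = q (C (z i0)) * q (X i) := by
      intro i
      rw [← map_mul, ← map_mul, Ideal.Quotient.eq]
      simpa [mul_comm] using hs i
    have e1 := ZN.eval₂_scale F' hF' (q.comp C) (q (C (z i0))) (fun i => q (X i))
    have e2 := ZN.eval₂_scale F' hF' (q.comp C) (q (X i0)) (fun i => q (C (z i)))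
    have e3 : eval₂ (q.comp C) (fun i => q (C (z i))) F' = 0 := by
      have : q (C (eval z F')) = eval₂ (q.comp C) (fun i => q (C (z i))) F' := by
        rw [eval, coe_eval₂Hom, ← RingHom.comp_apply, hom_eval₂]
        rfl
      rw [← this, h0]; simp
    have e4 : eval₂ (q.comp C) (fun i => q (X i)) F' = q F' := by
      conv_rhs => rw [← eval₂_eta F', hom_eval₂]
    rw [e3, mul_zero] at e2
    simp_rw [hq] at e2
    rw [e2, e4] at e1
    rw [map_mul, map_pow, mul_comm, ← e1]
  have hmin : 𝔐 ∈ (Ideal.span (s : Set (MvPolynomial ι B))).minimalPrimes := by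
    refine ⟨⟨hpr, ?_⟩, ?_⟩
    · rw [Ideal.span_le]
      intro x hx
      simp only [s, Finset.coe_image] at hx
      obtain ⟨i, -, rfl⟩ := hx
      exact 𝔐.sub_mem (𝔐.mul_mem_left _ (hCz _)) (𝔐.mul_mem_left _ (hCz _))
    · rintro q ⟨hq, hsq⟩ hq𝔐
      have h1 : C (z i0) ∈ q := by
        rcases hq.mem_or_mem (hsq key) with h | h
        · exact absurd (hq𝔐 h) hFM
        · exact hq.mem_of_pow_mem _ h
      have h2 : ∀ i, C (z i) ∈ q := by
        intro i
        have := q.add_mem (hsq (hs i)) (q.mul_mem_left (X i) h1)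
        rw [sub_add_cancel] at this
        exact (hq.mem_or_mem this).resolve_left fun h => hX (hq𝔐 h)
      rw [h𝔐, ← hz, Ideal.map_span, Ideal.span_le]
      rintro _ ⟨_, ⟨i, rfl⟩, rfl⟩
      exact h2 i
  have h1 := Ideal.height_le_card_of_mem_minimalPrimes_span_finset hmin
  have h2 := ZN.height_map_C (σ := ι) (maximalIdeal B)
  have h3 : s.card ≤ Nat.card ι - 1 := by
    refine Finset.card_image_le.trans ?_
    simp
  have h4 : 0 < Nat.card ι := Nat.card_pos_iff.2 ⟨⟨i0⟩, inferInstance⟩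
  have h5 := hd.trans (h2.trans h1)
  norm_cast at h5
  omega

open MvPolynomial IsLocalRing in
lemma ZN.quasiReg_indep {B : Type*} [CommRing B] [IsLocalRing B] [IsNoetherianRing B]
    {κ : Type*} [Finite κ] (x : κ → B) (hx : Ideal.span (Set.range x) = maximalIdeal B)
    (hd : (Nat.card κ : ℕ∞) ≤ (maximalIdeal B).height)
    {ι : Type*} [Finite ι] (z : ι → B) (hz : ∀ i, z i ∈ maximalIdeal B)
    (hind : ∀ (s : Finset ι) (c : ι → B), ∑ i ∈ s, c i * z i ∈ maximalIdeal B ^ 2 →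
      ∀ i ∈ s, c i ∈ maximalIdeal B)
    {n : ℕ} (F : MvPolynomial ι B)
    (hF : F.IsHomogeneous n) (h : eval z F ∈ maximalIdeal B ^ (n + 1)) (a : ι →₀ ℕ) :
    coeff a F ∈ maximalIdeal B := by
  classical
  let v : ι → CotangentSpace B := fun i => (maximalIdeal B).toCotangent ⟨z i, hz i⟩
  have hv : LinearIndependent (ResidueField B) v := by
    rw [linearIndependent_iff']
    intro s g hg i hi
    choose c hc using fun i => residue_surjective (g i)
    have h1 : ∑ i ∈ s, g i • v i =
        (maximalIdeal B).toCotangent (∑ i ∈ s, c i • ⟨z i, hz i⟩) := by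
      rw [map_sum]
      refine Finset.sum_congr rfl fun i _ => ?_
      rw [map_smul, ← hc i]
      rfl
    rw [h1, Ideal.toCotangent_eq_zero] at hg
    have := hind s c (by simpa using hg) i hi
    rw [← hc i]
    exact (residue_eq_zero_iff _).2 this
  let b := Module.Basis.sumExtend hv
  have : Finite (ι ⊕ Module.Basis.sumExtendIndex hv) := Module.Finite.finite_basis b
  have hb : ∀ i, b (Sum.inl i) = v i := fun i => by
    simp only [b, Module.Basis.sumExtend, Module.Basis.coe_reindex, Module.Basis.coe_extend,
      Function.comp_apply]
    rfl
  choose y hy using fun j => (maximalIdeal B).toCotangent_surjective (b (Sum.inr j))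
  let z' : ι ⊕ Module.Basis.sumExtendIndex hv → maximalIdeal B := Sum.elim (fun i => ⟨z i, hz i⟩) y
  have hz' : ∀ j, (maximalIdeal B).toCotangent (z' j) = b j := by
    rintro (i | j)
    · rw [hb]; rfl
    · exact hy j
  have hspan : Ideal.span (Set.range fun j => (z' j : B)) = maximalIdeal B := by
    have h1 : Submodule.span B (Set.range z') = ⊤ := by
      rw [← CotangentSpace.span_image_eq_top_iff, ← Set.range_comp, ← b.span_eq]
      congr 2
      funext j
      exact hz' j
    have h2 := congrArg (Submodule.map (Submodule.subtype (maximalIdeal B))) h1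
    rw [Submodule.map_span, ← Set.range_comp, Submodule.map_subtype_top] at h2
    exact h2
  have hcard : (Nat.card (ι ⊕ Module.Basis.sumExtendIndex hv) : ℕ∞) ≤ (maximalIdeal B).height := by
    refine le_trans ?_ hd
    rw [← Module.finrank_eq_nat_card_basis b,
      ← spanFinrank_maximalIdeal_eq_finrank_cotangentSpace, ← hx]
    norm_cast
    refine (Submodule.spanFinrank_span_le_ncard_of_finite (Set.finite_range x)).trans ?_
    rw [← Set.image_univ, ← Set.ncard_univ]
    exact Set.ncard_image_le
  have := ZN.quasiReg_local (fun j => (z' j : B)) hspan hcard (rename Sum.inl F)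
    ((hF.rename_isHomogeneous)) (by
      rw [eval_rename]
      exact h) (a.mapDomain Sum.inl)
  rwa [coeff_rename_mapDomain _ Sum.inl_injective] at this

lemma ZN.height_map_mk {A B : Type*} [CommRing A] [CommRing B] (ρ : A →+* B)
    (hρ : Function.Surjective ρ) (I : Ideal A) (hI : I = RingHom.ker ρ) (N : Ideal A) :
    (N.map (Ideal.Quotient.mk I)).height = (N.map ρ).height := by
  subst hI
  have h : ρ = ((RingHom.quotientKerEquivOfSurjective hρ : _ ≃+* _) : _ →+* _).comp
      (Ideal.Quotient.mk (RingHom.ker ρ)) := RingHom.ext fun _ => rfl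
  have h2 : N.map ρ = Ideal.map ((RingHom.quotientKerEquivOfSurjective hρ : _ ≃+* _) : _ →+* _)
      (N.map (Ideal.Quotient.mk (RingHom.ker ρ))) := by
    rw [Ideal.map_map, ← h]
  rw [h2]
  exact (RingEquiv.height_map (RingHom.quotientKerEquivOfSurjective hρ) _).symm

set_option maxHeartbeats 1000000 in
open MvPolynomial IsLocalRing in
lemma ZN.loc_gens {R : Type*} [CommRing R] [IsLocalRing R] [IsNoetherianRing R]
    {κ : Type*} [Finite κ] (x : κ → R) (hx : Ideal.span (Set.range x) = maximalIdeal R)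
    (hd : (Nat.card κ : ℕ∞) ≤ (maximalIdeal R).height)
    {σ : Type*} [Finite σ] (N : Ideal (MvPolynomial σ R)) [N.IsPrime]
    (hN : N.comap C = maximalIdeal R) :
    ∃ (e : ℕ) (z : Fin e → MvPolynomial σ R), Ideal.span (Set.range (Sum.elim
        (fun i => algebraMap (MvPolynomial σ R) (Localization.AtPrime N) (C (x i)))
        (fun j => algebraMap _ (Localization.AtPrime N) (z j)))) =
          maximalIdeal (Localization.AtPrime N) ∧
      (Nat.card (κ ⊕ Fin e) : ℕ∞) ≤ (maximalIdeal (Localization.AtPrime N)).height := by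
  classical
  let ρ : MvPolynomial σ R →+* MvPolynomial σ (ResidueField R) := map (residue R)
  have hρs : Function.Surjective ρ := map_surjective _ residue_surjective
  have hker : RingHom.ker ρ = (maximalIdeal R).map C := by
    rw [ker_map, ker_residue]
  have hle : (maximalIdeal R).map C ≤ N := by
    rw [Ideal.map_le_iff_le_comap, hN]
  let p := N.map ρ
  have hp : p.IsPrime := Ideal.map_isPrime_of_surjective hρs (hker ▸ hle)
  have hcomap : p.comap ρ = N := by
    rw [Ideal.comap_map_of_surjective' _ hρs, hker, sup_eq_left.2 hle]
  have hreg : IsRegularLocalRing (Localization.AtPrime p) := inferInstance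
  have hfg := (maximalIdeal (Localization.AtPrime p)).fg_of_isNoetherianRing
  set e := (maximalIdeal (Localization.AtPrime p)).spanFinrank with he
  have hep : (e : ℕ∞) = p.height := by
    have h1 := (isRegularLocalRing_iff (Localization.AtPrime p)).1 hreg
    rw [IsLocalization.AtPrime.ringKrullDim_eq_height p] at h1
    exact_mod_cast h1
  have hfin := Submodule.FG.finite_generators hfg
  have hncard := Submodule.FG.generators_ncard hfg
  obtain ⟨w, hw⟩ : ∃ w : Fin e → Localization.AtPrime p,
      Ideal.span (Set.range w) = maximalIdeal (Localization.AtPrime p) := by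
    have : Finite (maximalIdeal (Localization.AtPrime p)).generators := hfin
    let eq := Finite.equivFinOfCardEq (α := (maximalIdeal (Localization.AtPrime p)).generators)
      (n := e) hncard
    refine ⟨fun i => (eq.symm i : Localization.AtPrime p), ?_⟩
    conv_rhs => rw [← Submodule.span_generators (maximalIdeal (Localization.AtPrime p))]
    congr 1
    ext y
    constructor
    · rintro ⟨i, rfl⟩; exact (eq.symm i).2
    · intro hy; exact ⟨eq ⟨y, hy⟩, by simp⟩
  have hw' : ∀ i, ∃ (z : MvPolynomial σ R) (u : Localization.AtPrime p), IsUnit u ∧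
      algebraMap _ (Localization.AtPrime p) (ρ z) = w i * u := by
    intro i
    obtain ⟨⟨a, s⟩, has⟩ := IsLocalization.surj p.primeCompl (w i)
    obtain ⟨z, rfl⟩ := hρs a
    exact ⟨z, _, IsLocalization.map_units _ s, has.symm⟩
  choose z u hu hz using hw'
  have hspan : Ideal.span (Set.range fun i => algebraMap _ (Localization.AtPrime p) (ρ (z i))) =
      maximalIdeal (Localization.AtPrime p) := by
    rw [← hw]
    apply le_antisymm
    · rw [Ideal.span_le]
      rintro _ ⟨i, rfl⟩
      simp only [hz]
      exact Ideal.mul_mem_right _ _ (Ideal.subset_span ⟨i, rfl⟩)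
    · rw [Ideal.span_le]
      rintro _ ⟨i, rfl⟩
      obtain ⟨v, hv⟩ := (hu i)
      have : w i = algebraMap _ (Localization.AtPrime p) (ρ (z i)) * ↑v⁻¹ := by
        rw [hz, ← hv, mul_assoc, Units.mul_inv, mul_one]
      rw [this]
      exact Ideal.mul_mem_right _ _ (Ideal.subset_span ⟨i, rfl⟩)
  have hzN : ∀ i, z i ∈ N := by
    intro i
    rw [← hcomap, Ideal.mem_comap, ← IsLocalization.AtPrime.to_map_mem_maximal_iff
      (Localization.AtPrime p) p, ← hspan]
    exact Ideal.subset_span ⟨i, rfl⟩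
  refine ⟨e, z, ?_, ?_⟩
  · apply le_antisymm
    · rw [Ideal.span_le]
      rintro _ ⟨i | j, rfl⟩
      · simp only [Sum.elim_inl]
        refine (IsLocalization.AtPrime.to_map_mem_maximal_iff _ N _).2 (hle ?_)
        exact Ideal.mem_map_of_mem _ (hx ▸ Ideal.subset_span ⟨i, rfl⟩)
      · simp only [Sum.elim_inr]
        exact (IsLocalization.AtPrime.to_map_mem_maximal_iff _ N _).2 (hzN j)
    · set J := Ideal.span (Set.range (Sum.elim
        (fun i => algebraMap (MvPolynomial σ R) (Localization.AtPrime N) (C (x i)))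
        (fun j => algebraMap _ (Localization.AtPrime N) (z j)))) with hJ
      rw [← Localization.AtPrime.map_eq_maximalIdeal, Ideal.map_le_iff_le_comap]
      intro a ha
      have h1 : algebraMap _ (Localization.AtPrime p) (ρ a) ∈
          maximalIdeal (Localization.AtPrime p) := by
        rw [IsLocalization.AtPrime.to_map_mem_maximal_iff _ p]
        exact Ideal.mem_map_of_mem _ ha
      have h2 : Ideal.span (Set.range fun i => algebraMap _ (Localization.AtPrime p) (ρ (z i))) =
          ((Ideal.span (Set.range z)).map ρ).map (algebraMap _ (Localization.AtPrime p)) := by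
        rw [Ideal.map_span, Ideal.map_span, ← Set.range_comp, ← Set.range_comp]
        rfl
      rw [← hspan, h2, IsLocalization.algebraMap_mem_map_algebraMap_iff p.primeCompl] at h1
      obtain ⟨t, ht, hta⟩ := h1
      obtain ⟨t, rfl⟩ := hρs t
      rw [← map_mul, ← Ideal.mem_comap, Ideal.comap_map_of_surjective' _ hρs, hker] at hta
      have htN : t ∉ N := fun h => ht (Ideal.mem_map_of_mem _ h)
      have h3 : Ideal.span (Set.range z) ⊔ (maximalIdeal R).map C ≤ J.comap (algebraMap _ _) := by
        apply sup_le
        · rw [Ideal.span_le]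
          rintro _ ⟨i, rfl⟩
          exact Ideal.subset_span ⟨Sum.inr i, rfl⟩
        · rw [← hx, Ideal.map_span, Ideal.span_le]
          rintro _ ⟨_, ⟨i, rfl⟩, rfl⟩
          exact Ideal.subset_span ⟨Sum.inl i, rfl⟩
      have h4 := h3 hta
      rw [Ideal.mem_comap, map_mul] at h4
      exact (Ideal.unit_mul_mem_iff_mem J
        (IsLocalization.map_units (Localization.AtPrime N) (⟨t, htN⟩ : N.primeCompl))).1 h4
  · have hlies : N.LiesOver (maximalIdeal R) := ⟨hN.symm⟩
    have h1 := Ideal.height_eq_height_add_of_liesOver_of_hasGoingDown (maximalIdeal R) N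
    have h2 : (N.map (Ideal.Quotient.mk ((maximalIdeal R).map
        (algebraMap R (MvPolynomial σ R))))).height = p.height := by
      exact ZN.height_map_mk ρ hρs _ hker.symm N
    have h3 : (maximalIdeal (Localization.AtPrime N)).height = N.height := by
      have := IsLocalization.AtPrime.ringKrullDim_eq_height N (Localization.AtPrime N)
      rw [← maximalIdeal_height_eq_ringKrullDim] at this
      exact_mod_cast this
    rw [h3, h1, h2, ← hep, Nat.card_sum, Nat.card_fin, Nat.cast_add]
    gcongr

open MvPolynomial in
lemma ZN.hom_eval {ι A B : Type*} [CommRing A] [CommRing B] (z : ι → A) (F : MvPolynomial ι A)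
    (φ : A →+* B) {w : ι → B} (hw : ∀ i, φ (z i) = w i) : φ (eval z F) = eval₂ φ w F := by
  have : w = fun i => φ (z i) := funext fun i => (hw i).symm
  subst this
  rw [← eval₂_id, hom_eval₂]
  rfl


open MvPolynomial in
lemma ZN.pow_cert {R W : Type*} [CommRing R] (m' : Ideal (MvPolynomial W R)) (k : ℕ)
    (y : MvPolynomial W R) (hy : y ∈ m' ^ k) :
    ∃ S₀ : Finset W, ∀ S : Finset W, S₀ ⊆ S → ∃ y' : MvPolynomial {w // w ∈ S} R,
      y' ∈ (m'.comap (rename (R := R) (Subtype.val : {w // w ∈ S} → W))) ^ k ∧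
        rename Subtype.val y' = y := by
  classical
  have base : ∀ y : MvPolynomial W R, ∃ S₀ : Finset W, ∀ S : Finset W, S₀ ⊆ S →
      ∃ y' : MvPolynomial {w // w ∈ S} R, rename Subtype.val y' = y := by
    intro y
    obtain ⟨S₀, q, rfl⟩ := exists_finset_rename y
    refine ⟨S₀, fun S hS => ⟨rename (fun w => ⟨w.1, hS w.2⟩) q, ?_⟩⟩
    rw [rename_rename]; rfl
  induction k generalizing y with
  | zero =>
    obtain ⟨S₀, h⟩ := base y
    refine ⟨S₀, fun S hS => ?_⟩
    obtain ⟨y', h'⟩ := h S hS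
    exact ⟨y', by simp, h'⟩
  | succ k ih =>
    rw [pow_succ] at hy
    induction hy using Submodule.mul_induction_on' with
    | mem_mul_mem a ha b hb =>
      obtain ⟨S₁, h1⟩ := ih a ha
      obtain ⟨S₂, h2⟩ := base b
      refine ⟨S₁ ∪ S₂, fun S hS => ?_⟩
      obtain ⟨a', ha', rfl⟩ := h1 S (Finset.union_subset_left hS)
      obtain ⟨b', rfl⟩ := h2 S (Finset.union_subset_right hS)
      refine ⟨a' * b', ?_, by simp⟩
      rw [pow_succ]
      exact Ideal.mul_mem_mul ha' hb
    | add x _ y _ hx hy =>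
      obtain ⟨S₁, h1⟩ := hx
      obtain ⟨S₂, h2⟩ := hy
      refine ⟨S₁ ∪ S₂, fun S hS => ?_⟩
      obtain ⟨a', ha', rfl⟩ := h1 S (Finset.union_subset_left hS)
      obtain ⟨b', hb', rfl⟩ := h2 S (Finset.union_subset_right hS)
      exact ⟨a' + b', Ideal.add_mem _ ha' hb', by simp⟩

open IsLocalRing in
lemma ZN.indep_loc {A : Type*} [CommRing A] (m : Ideal A) [m.IsPrime] {ι : Type*} (z : ι → A)
    (hind : ∀ (s : Finset ι) (c : ι → A), ∑ i ∈ s, c i * z i ∈ m ^ 2 → ∀ i ∈ s, c i ∈ m)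
    (s : Finset ι) (c : ι → Localization.AtPrime m)
    (h : ∑ i ∈ s, c i * algebraMap A (Localization.AtPrime m) (z i) ∈
      maximalIdeal (Localization.AtPrime m) ^ 2) (i : ι) (hi : i ∈ s) :
    c i ∈ maximalIdeal (Localization.AtPrime m) := by
  classical
  obtain ⟨b, hb⟩ := IsLocalization.exist_integer_multiples m.primeCompl s c
  choose! d hd using hb
  have h1 : algebraMap A (Localization.AtPrime m) (∑ i ∈ s, d i * z i) ∈
      maximalIdeal (Localization.AtPrime m) ^ 2 := by
    have : algebraMap A (Localization.AtPrime m) (∑ i ∈ s, d i * z i) =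
        algebraMap A _ (b : A) * ∑ i ∈ s, c i * algebraMap A (Localization.AtPrime m) (z i) := by
      rw [map_sum, Finset.mul_sum]
      refine Finset.sum_congr rfl fun j hj => ?_
      rw [map_mul, hd j hj, Algebra.smul_def, mul_assoc]
    rw [this]
    exact Ideal.mul_mem_left _ _ h
  rw [← Localization.AtPrime.map_eq_maximalIdeal, ← Ideal.map_pow,
    IsLocalization.algebraMap_mem_map_algebraMap_iff m.primeCompl] at h1
  obtain ⟨u, hu, h1⟩ := h1
  rw [Finset.mul_sum] at h1
  simp_rw [← mul_assoc] at h1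
  have h2 := hind s (fun i => u * d i) h1 i hi
  have h3 := (‹m.IsPrime›.mem_or_mem h2).resolve_left hu
  have h4 := (IsLocalization.AtPrime.to_map_mem_maximal_iff (Localization.AtPrime m) m _).2 h3
  rw [hd i hi, Algebra.smul_def] at h4
  exact (Ideal.unit_mul_mem_iff_mem _ (IsLocalization.map_units (Localization.AtPrime m) b)).1 h4

open MvPolynomial IsLocalRing in
lemma ZN.quasiReg_poly_fin {R : Type*} [CommRing R] [IsLocalRing R] [IsNoetherianRing R]
    {κ : Type*} [Finite κ] (x : κ → R) (hx : Ideal.span (Set.range x) = maximalIdeal R)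
    (hd : (Nat.card κ : ℕ∞) ≤ (maximalIdeal R).height)
    {W : Type*} (m' : Ideal (MvPolynomial W R)) [m'.IsPrime] (hm' : m'.comap C = maximalIdeal R)
    {ι : Type*} [Finite ι] (z : ι → MvPolynomial W R) (hz : ∀ i, z i ∈ m')
    (hind : ∀ (s : Finset ι) (c : ι → MvPolynomial W R), ∑ i ∈ s, c i * z i ∈ m' ^ 2 →
      ∀ i ∈ s, c i ∈ m')
    {n : ℕ} (F : MvPolynomial ι (MvPolynomial W R)) (hF : F.IsHomogeneous n)
    (h : eval z F ∈ m' ^ (n + 1)) (a : ι →₀ ℕ) : coeff a F ∈ m' := by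
  classical
  have := Fintype.ofFinite ι
  obtain ⟨S₀, h0⟩ := ZN.pow_cert m' _ _ h
  choose Sz hSz using fun i => ZN.pow_cert m' 0 (z i) (by simp)
  choose Sc hSc using fun a => ZN.pow_cert m' 0 (coeff a F) (by simp)
  let S := S₀ ∪ Finset.univ.biUnion Sz ∪ F.support.biUnion Sc
  obtain ⟨y, hy, hye⟩ := h0 S (Finset.union_subset_left (Finset.union_subset_left (subset_refl S)))
  have hz' : ∀ i, ∃ z', rename (R := R) (Subtype.val : {w // w ∈ S} → W) z' = z i := by
    intro i
    obtain ⟨z', -, hz'⟩ := hSz i S (by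
      refine subset_trans ?_ (Finset.union_subset_left (subset_refl S))
      refine subset_trans ?_ Finset.subset_union_right
      exact Finset.subset_biUnion_of_mem Sz (Finset.mem_univ i))
    exact ⟨z', hz'⟩
  choose z' hz' using hz'
  let φ : MvPolynomial {w // w ∈ S} R →+* MvPolynomial W R := (rename Subtype.val).toRingHom
  have hφ : Function.Injective φ := rename_injective _ Subtype.val_injective
  have hF' : ∃ F' : MvPolynomial ι (MvPolynomial {w // w ∈ S} R), map φ F' = F := by
    have : F ∈ Set.range (map φ : MvPolynomial ι _ →+* _) := by
      rw [mem_range_map_iff_coeffs_subset]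
      intro c hc
      rw [Finset.mem_coe, mem_coeffs_iff] at hc
      obtain ⟨a, ha, rfl⟩ := hc
      obtain ⟨z', -, hz'⟩ := hSc a S (by
        refine subset_trans ?_ Finset.subset_union_right
        exact Finset.subset_biUnion_of_mem Sc ha)
      exact ⟨z', hz'⟩
    exact this
  obtain ⟨F', hF'⟩ := hF'
  have hFh : F'.IsHomogeneous n := by
    intro d hd
    refine hF (d := d) ?_
    rw [← hF', coeff_map]
    exact fun h => hd (hφ (by rw [h, map_zero]))
  have hev : eval z' F' = y := by
    apply hφ
    have h1 : φ (eval z' F') = eval z F := by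
      conv_rhs => rw [← hF', eval_map]
      exact ZN.hom_eval z' F' φ hz'
    rw [h1, ← hye]
    rfl
  let N := m'.comap φ
  have hN : N.comap C = maximalIdeal R := by
    rw [← hm', Ideal.comap_comap]
    congr 1
    ext r
    simp [φ]
  obtain ⟨e, w, hw1, hw2⟩ := ZN.loc_gens x hx hd N hN
  have h6 := ZN.quasiReg_indep _ hw1 hw2 (fun i => algebraMap _ (Localization.AtPrime N) (z' i))
    (fun i => (IsLocalization.AtPrime.to_map_mem_maximal_iff (Localization.AtPrime N) N _).2
      (by rw [Ideal.mem_comap]; exact (hz' i).symm ▸ hz i))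
    (ZN.indep_loc N z' (fun s c hc i hi => by
      refine hind s (fun i => φ (c i)) ?_ i hi
      have h7 : φ (∑ i ∈ s, c i * z' i) ∈ m' ^ 2 := by
        have := Ideal.mem_map_of_mem φ hc
        rw [Ideal.map_pow] at this
        exact Ideal.pow_right_mono Ideal.map_comap_le _ this
      rw [map_sum] at h7
      simp_rw [map_mul] at h7
      convert h7 using 3 with j
      exact (hz' j).symm)) (map (algebraMap _ (Localization.AtPrime N)) F')
    (hFh.map _) (by
      rw [eval_map, ← ZN.hom_eval z' F' _ (fun _ => rfl), hev,
        ← Localization.AtPrime.map_eq_maximalIdeal, ← Ideal.map_pow]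
      exact Ideal.mem_map_of_mem _ hy) a
  rw [coeff_map, IsLocalization.AtPrime.to_map_mem_maximal_iff _ N] at h6
  rw [← hF', coeff_map]
  exact h6

open MvPolynomial IsLocalRing in
lemma ZN.quasiReg_poly {R : Type*} [CommRing R] [IsLocalRing R] [IsNoetherianRing R]
    {κ : Type*} [Finite κ] (x : κ → R) (hx : Ideal.span (Set.range x) = maximalIdeal R)
    (hd : (Nat.card κ : ℕ∞) ≤ (maximalIdeal R).height)
    {W : Type*} (m' : Ideal (MvPolynomial W R)) [m'.IsPrime] (hm' : m'.comap C = maximalIdeal R)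
    {ι : Type*} (z : ι → MvPolynomial W R) (hz : ∀ i, z i ∈ m')
    (hind : ∀ (s : Finset ι) (c : ι → MvPolynomial W R), ∑ i ∈ s, c i * z i ∈ m' ^ 2 →
      ∀ i ∈ s, c i ∈ m')
    {n : ℕ} (F : MvPolynomial ι (MvPolynomial W R)) (hF : F.IsHomogeneous n)
    (h : eval z F ∈ m' ^ (n + 1)) (a : ι →₀ ℕ) : coeff a F ∈ m' := by
  classical
  obtain ⟨T, G, rfl⟩ := exists_finset_rename F
  by_cases ha : ∃ u : {i // i ∈ T} →₀ ℕ, u.mapDomain Subtype.val = a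
  · obtain ⟨u, rfl⟩ := ha
    rw [coeff_rename_mapDomain _ Subtype.val_injective]
    refine ZN.quasiReg_poly_fin x hx hd m' hm' (fun i : {i // i ∈ T} => z i) (fun i => hz i) ?_ G
      ((IsHomogeneous.rename_isHomogeneous_iff Subtype.val_injective).1 hF)
      (by rw [eval_rename] at h; exact h) u
    intro s c hc i hi
    have := hind (s.map (Function.Embedding.subtype _))
      (fun i => if hi : i ∈ T then c ⟨i, hi⟩ else 0) (by
        rw [Finset.sum_map]
        simpa using hc) i (Finset.mem_map.2 ⟨i, hi, rfl⟩)
    simpa using this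
  · rw [coeff_rename_eq_zero _ _ _ (fun u hu => (ha ⟨u, hu⟩).elim)]
    exact zero_mem _

open MvPolynomial IsLocalRing in
lemma ZN.contract {R : Type*} [CommRing R] [IsLocalRing R] [IsNoetherianRing R]
    {κ : Type*} [Finite κ] (x : κ → R) (hx : Ideal.span (Set.range x) = maximalIdeal R)
    (hd : (Nat.card κ : ℕ∞) ≤ (maximalIdeal R).height)
    {W : Type*} (m' : Ideal (MvPolynomial W R)) [m'.IsPrime] (hm' : m'.comap C = maximalIdeal R)
    (n : ℕ) (f : R) (hf : C f ∈ m' ^ n) : f ∈ maximalIdeal R ^ n := by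
  induction n with
  | zero => simp
  | succ n ih =>
    have h1 := ih (Ideal.pow_le_pow_right (Nat.le_succ n) hf)
    rw [← hx] at h1
    obtain ⟨F, hF, rfl⟩ := (Ideal.mem_span_pow_iff_exists_isHomogeneous x f).1 h1
    rw [pow_succ']
    refine ZN.eval_mem x _ _ n (fun i => hx ▸ Ideal.subset_span ⟨i, rfl⟩) F hF fun a => ?_
    obtain ⟨S, hS⟩ := ZN.pow_cert m' _ _ hf
    obtain ⟨y, hy, hye⟩ := hS S (subset_refl S)
    have hy2 : y = C (eval x F) := by
      apply rename_injective _ (Subtype.val_injective (p := fun w => w ∈ S))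
      rw [hye, rename_C]
    let φ : MvPolynomial {w // w ∈ S} R →+* MvPolynomial W R := (rename Subtype.val).toRingHom
    let N := m'.comap φ
    have hN : N.comap C = maximalIdeal R := by
      rw [← hm', Ideal.comap_comap]
      congr 1
      ext r
      simp [φ]
    obtain ⟨e, w, hw1, hw2⟩ := ZN.loc_gens x hx hd N hN
    let ψ : R →+* Localization.AtPrime N := (algebraMap (MvPolynomial {w // w ∈ S} R) _).comp C
    have h6 := ZN.quasiReg_local _ hw1 hw2 (n := n) (rename Sum.inl (map ψ F))
      ((hF.map _).rename_isHomogeneous) (by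
        rw [eval_rename, eval_map]
        change eval₂ ψ (fun i => ψ (x i)) F ∈ _
        rw [← ZN.hom_eval x F ψ (fun _ => rfl),
          ← Localization.AtPrime.map_eq_maximalIdeal, ← Ideal.map_pow]
        change algebraMap (MvPolynomial {w // w ∈ S} R) (Localization.AtPrime N) (C (eval x F)) ∈ _
        rw [← hy2]
        exact Ideal.mem_map_of_mem _ hy) (a.mapDomain Sum.inl)
    rw [coeff_rename_mapDomain _ Sum.inl_injective, coeff_map] at h6
    have h7 := (IsLocalization.AtPrime.to_map_mem_maximal_iff (Localization.AtPrime N) N _).1 h6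
    rw [← hN]
    exact h7

lemma ZN.exists_basis {A : Type*} [CommRing A] (m Q : Ideal A) [m.IsMaximal] :
    ∃ (s : Set (Q ⧸ (m • (⊤ : Submodule A Q)))) (b : s → A), (∀ i, b i ∈ Q) ∧
      Q ≤ Ideal.span (Set.range b) ⊔ m * Q ∧
      ∀ (t : Finset s) (c : s → A), ∑ i ∈ t, c i * b i ∈ m * Q → ∀ i ∈ t, c i ∈ m := by
  classical
  let _ : Field (A ⧸ m) := Ideal.Quotient.field m
  let M := Q ⧸ (m • (⊤ : Submodule A Q))
  let bas := Module.Basis.ofVectorSpace (A ⧸ m) M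
  choose b hb using fun i => Submodule.mkQ_surjective (m • (⊤ : Submodule A Q)) (bas i)
  refine ⟨_, fun i => (b i : A), fun i => (b i).2, ?_, ?_⟩
  · intro y hy
    have h2 := bas.linearCombination_repr ((m • (⊤ : Submodule A Q)).mkQ ⟨y, hy⟩)
    choose g hg using Ideal.Quotient.mk_surjective (I := m)
    set r := bas.repr ((m • (⊤ : Submodule A Q)).mkQ ⟨y, hy⟩) with hr
    have hc : (m • (⊤ : Submodule A Q)).mkQ ⟨y, hy⟩ =
        (m • (⊤ : Submodule A Q)).mkQ (∑ i ∈ r.support, g (r i) • b i) := by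
      rw [map_sum, ← h2, Finsupp.linearCombination_apply, Finsupp.sum]
      refine Finset.sum_congr rfl fun i hi => ?_
      rw [map_smul, hb]
      conv_lhs => rw [← hg (r i)]
      rfl
    rw [← sub_eq_zero, ← map_sub, Submodule.mkQ_apply, Submodule.Quotient.mk_eq_zero,
      Submodule.mem_smul_top_iff] at hc
    have : y = ((∑ i ∈ r.support, g (r i) • b i : Q) : A) +
        ((⟨y, hy⟩ - ∑ i ∈ r.support, g (r i) • b i : Q) : A) := by simp
    rw [this]
    refine Submodule.add_mem_sup ?_ hc
    rw [AddSubmonoidClass.coe_finsetSum]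
    refine Ideal.sum_mem _ fun i _ => ?_
    exact Ideal.mul_mem_left _ _ (Ideal.subset_span ⟨i, rfl⟩)
  · intro t c hc i hi
    have h1 : (m • (⊤ : Submodule A Q)).mkQ (∑ i ∈ t, c i • b i) = 0 := by
      rw [Submodule.mkQ_apply, Submodule.Quotient.mk_eq_zero, Submodule.mem_smul_top_iff]
      simpa using hc
    rw [map_sum] at h1
    have h2 : ∑ i ∈ t, (Ideal.Quotient.mk m (c i)) • bas i = 0 := by
      rw [← h1]
      refine Finset.sum_congr rfl fun i _ => ?_
      rw [map_smul, hb]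
      rfl
    exact Ideal.Quotient.eq_zero_iff_mem.1
      (linearIndependent_iff'.1 bas.linearIndependent t _ h2 i hi)

lemma ZN.pow_le_basis {A : Type*} [CommRing A] (m Q J : Ideal A) (hJ : J ≤ Q) (h : Q ≤ J ⊔ m * Q)
    (i : ℕ) : Q ^ i ≤ J ^ i ⊔ m * Q ^ i := by
  induction i with
  | zero => simp
  | succ i ih =>
    calc Q ^ (i + 1) = Q ^ i * Q := pow_succ _ _
      _ ≤ (J ^ i ⊔ m * Q ^ i) * Q := Ideal.mul_mono_left ih
      _ = J ^ i * Q ⊔ m * Q ^ (i + 1) := by rw [Ideal.sup_mul, mul_assoc, ← pow_succ]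
      _ ≤ J ^ i * (J ⊔ m * Q) ⊔ m * Q ^ (i + 1) := by gcongr
      _ ≤ J ^ (i + 1) ⊔ m * Q ^ (i + 1) := by
        rw [Ideal.mul_sup, ← pow_succ]
        refine sup_le (sup_le le_sup_left ?_) le_sup_right
        refine le_sup_of_le_right ?_
        calc J ^ i * (m * Q) = m * (J ^ i * Q) := by ring
          _ ≤ m * (Q ^ i * Q) := by gcongr
          _ = _ := by rw [pow_succ]

open MvPolynomial in
lemma ZN.principle {A : Type*} [CommRing A] (m Q : Ideal A) [m.IsMaximal] (hQm : Q ≤ m) (τ : A)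
    (hτm : τ ∈ m) (hτ : ∀ c, c * τ ∈ Q ⊔ m ^ 2 → c ∈ m) (hQ2 : Q ⊓ m ^ 2 ≤ m * Q)
    (hQR : ∀ (s : Set (Q ⧸ (m • (⊤ : Submodule A Q)))) (z : Option s → A), (∀ i, z i ∈ m) →
      (∀ (t : Finset (Option s)) (c : Option s → A), ∑ i ∈ t, c i * z i ∈ m ^ 2 →
        ∀ i ∈ t, c i ∈ m) →
      ∀ (n : ℕ) (F : MvPolynomial (Option s) A), F.IsHomogeneous n → eval z F ∈ m ^ (n + 1) →
      ∀ a, coeff a F ∈ m)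
    (e : ℕ) (q : ℕ → A) (hq : ∀ i, q i ∈ Q ^ i)
    (h : ∑ i ∈ Finset.range (e + 1), q i * τ ^ (e - i) ∈ m ^ (e + 1)) (i : ℕ) (hi : i ≤ e) :
    q i ∈ m * Q ^ i := by
  classical
  obtain ⟨s, b, hbQ, hspan, hind⟩ := ZN.exists_basis m Q
  have hJ : Ideal.span (Set.range b) ≤ Q := by
    rw [Ideal.span_le]; rintro _ ⟨i, rfl⟩; exact hbQ i
  have hF : ∀ i, ∃ F : MvPolynomial s A, F.IsHomogeneous i ∧ q i - eval b F ∈ m * Q ^ i := by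
    intro i
    obtain ⟨y, hy, y', hy', hyy⟩ := Submodule.mem_sup.1 (ZN.pow_le_basis m Q _ hJ hspan i (hq i))
    obtain ⟨F, hF, rfl⟩ := (Ideal.mem_span_pow_iff_exists_isHomogeneous b y).1 hy
    exact ⟨F, hF, by rw [← hyy]; simpa using hy'⟩
  choose F hFh hF using hF
  let z : Option s → A := fun o => o.elim τ b
  let G : MvPolynomial (Option s) A :=
    ∑ i ∈ Finset.range (e + 1), rename some (F i) * X none ^ (e - i)
  have hG : G.IsHomogeneous e := by
    refine IsHomogeneous.sum _ _ _ fun i hi => ?_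
    have h1 := ((hFh i).rename_isHomogeneous (f := some)).mul
      ((isHomogeneous_X A (none : Option s)).pow (e - i))
    have : i + 1 * (e - i) = e := by
      have := Finset.mem_range.1 hi
      omega
    rwa [this] at h1
  have hev : eval z G ∈ m ^ (e + 1) := by
    have h1 : eval z G = ∑ i ∈ Finset.range (e + 1), q i * τ ^ (e - i) -
        ∑ i ∈ Finset.range (e + 1), (q i - eval b (F i)) * τ ^ (e - i) := by
      rw [← Finset.sum_sub_distrib, map_sum]
      refine Finset.sum_congr rfl fun i _ => ?_
      rw [map_mul, map_pow, eval_X, eval_rename]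
      change eval b (F i) * τ ^ (e - i) = _
      ring
    rw [h1]
    refine Ideal.sub_mem _ h (Ideal.sum_mem _ fun i hi => ?_)
    have h2 : (q i - eval b (F i)) * τ ^ (e - i) ∈ m * Q ^ i * m ^ (e - i) :=
      Ideal.mul_mem_mul (hF i) (Ideal.pow_mem_pow hτm _)
    have h3 : m * Q ^ i * m ^ (e - i) ≤ m ^ (e + 1) := by
      calc m * Q ^ i * m ^ (e - i) ≤ m * m ^ i * m ^ (e - i) := by gcongr
        _ = m ^ (e + 1) := by
          rw [← pow_succ', ← pow_add]
          congr 1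
          have := Finset.mem_range.1 hi
          omega
    exact h3 h2
  have hcoef := hQR s z (by
    rintro (_ | i)
    · exact hτm
    · exact hQm (hbQ i)) (by
    intro t c hc
    let c' : Option s → A := fun o => if o ∈ t then c o else 0
    have h1 : ∑ i ∈ t, c i * z i = c' none * τ + ∑ i ∈ Finset.eraseNone t, c' (some i) * b i := by
      have h2 : ∑ i ∈ t, c i * z i = ∑ i ∈ Finset.insertNone (Finset.eraseNone t), c' i * z i := by
        have h3 : ∑ i ∈ t, c i * z i = ∑ i ∈ t, c' i * z i :=
          Finset.sum_congr rfl fun i hi => by simp only [c', if_pos hi]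
        rw [h3]
        refine Finset.sum_subset ?_ ?_
        · intro o ho
          rcases o with _ | i
          · simp
          · simpa using ho
        · intro o _ ho
          simp only [c', if_neg ho, zero_mul]
      rw [h2, Finset.sum_insertNone]
      rfl
    rw [h1] at hc
    have hsQ : ∑ i ∈ Finset.eraseNone t, c' (some i) * b i ∈ Q :=
      Ideal.sum_mem _ fun i _ => Ideal.mul_mem_left _ _ (hbQ i)
    have h3 : c' none ∈ m := by
      apply hτ
      have : c' none * τ = - (∑ i ∈ Finset.eraseNone t, c' (some i) * b i) +
        (c' none * τ + ∑ i ∈ Finset.eraseNone t, c' (some i) * b i) := by ring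
      rw [this]
      exact Submodule.add_mem_sup (Ideal.neg_mem_iff _ |>.2 hsQ) hc
    have h4 : ∑ i ∈ Finset.eraseNone t, c' (some i) * b i ∈ m ^ 2 := by
      refine (Ideal.add_mem_iff_right _ ?_).1 hc
      rw [pow_two]
      exact Ideal.mul_mem_mul h3 hτm
    have h5 := hind _ (fun i => c' (some i)) (hQ2 ⟨hsQ, h4⟩)
    rintro (_ | i) hi
    · simpa only [c', if_pos hi] using h3
    · simpa only [c', if_pos hi] using h5 i (by simpa using hi)) e G hG hev
  let Θ : MvPolynomial (Option s) A →+* Polynomial (MvPolynomial s (A ⧸ m)) :=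
    eval₂Hom (Polynomial.C.comp (C.comp (Ideal.Quotient.mk m)))
      (fun o => o.elim Polynomial.X (fun i => Polynomial.C (X i)))
  have hΘ0 : Θ G = 0 := by
    change eval₂ _ _ G = 0
    rw [eval₂_eq]
    refine Finset.sum_eq_zero fun d _ => ?_
    have : Ideal.Quotient.mk m (coeff d G) = 0 := Ideal.Quotient.eq_zero_iff_mem.2 (hcoef d)
    simp [this]
  have hΘr : ∀ H : MvPolynomial s A, Θ (rename some H) =
      Polynomial.C (map (Ideal.Quotient.mk m) H) := by
    intro H
    have : Θ.comp (rename some).toRingHom =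
        (Polynomial.C).comp (map (Ideal.Quotient.mk m) : MvPolynomial s A →+* _) := by
      apply MvPolynomial.ringHom_ext
      · intro r; simp [Θ]
      · intro j; simp [Θ]
    exact RingHom.congr_fun this H
  have hΘX : Θ (X none) = Polynomial.X := by simp [Θ]
  have h6 : map (Ideal.Quotient.mk m) (F i) = 0 := by
    have h7 := congrArg (fun p => Polynomial.coeff p (e - i)) hΘ0
    simp only [G, map_sum, map_mul, map_pow, hΘr, hΘX, Polynomial.finsetSum_coeff,
      Polynomial.coeff_C_mul_X_pow, Polynomial.coeff_zero] at h7
    rw [Finset.sum_eq_single i] at h7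
    · simpa using h7
    · intro j hj hji
      have := Finset.mem_range.1 hj
      rw [if_neg (by omega)]
    · intro h; exact absurd (Finset.mem_range.2 (by omega)) h
  have h8 : eval b (F i) ∈ m * Q ^ i := by
    refine ZN.eval_mem b m Q i hbQ (F i) (hFh i) fun a => ?_
    have := congrArg (coeff a) h6
    rw [coeff_map, coeff_zero] at this
    exact Ideal.Quotient.eq_zero_iff_mem.1 this
  have := Ideal.add_mem _ (hF i) h8
  simpa using this

lemma ZN.rep {A : Type*} [CommRing A] (m Q : Ideal A) (τ : A) (hm : m = Q ⊔ Ideal.span {τ})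
    (j k : ℕ) (h : A) (hh : h ∈ Q ^ j * m ^ k) :
    ∃ q : ℕ → A, (∀ i, q i ∈ Q ^ i) ∧ (∀ i < j, q i = 0) ∧
      h = ∑ i ∈ Finset.range (j + k + 1), q i * τ ^ (j + k - i) := by
  classical
  induction k generalizing h with
  | zero =>
    refine ⟨fun i => if i = j then h else 0, fun i => ?_, fun i hi => if_neg hi.ne, ?_⟩
    · dsimp only
      split_ifs with hi
      · subst hi; simpa using hh
      · exact zero_mem _
    · rw [Finset.sum_eq_single j]
      · simp
      · intro i _ hi; simp [hi]
      · intro h; simp at h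
  | succ k ih =>
    rw [pow_succ, ← mul_assoc] at hh
    induction hh using Submodule.mul_induction_on' with
    | mem_mul_mem g hg y hy =>
      obtain ⟨q, hq, hq0, rfl⟩ := ih g hg
      rw [hm] at hy
      obtain ⟨p, hp, w, hw, rfl⟩ := Submodule.mem_sup.1 hy
      obtain ⟨a, rfl⟩ := Ideal.mem_span_singleton'.1 hw
      refine ⟨fun i => (if i = 0 then 0 else q (i - 1) * p) +
        (if i ≤ j + k then q i * a else 0), fun i => ?_, fun i hi => ?_, ?_⟩
      · refine Ideal.add_mem _ ?_ ?_
        · split_ifs with hi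
          · exact zero_mem _
          · obtain ⟨i, rfl⟩ := Nat.exists_eq_succ_of_ne_zero hi
            rw [Nat.succ_eq_add_one, pow_succ]
            exact Ideal.mul_mem_mul (hq _) hp
        · split_ifs
          · exact Ideal.mul_mem_right _ _ (hq i)
          · exact zero_mem _
      · have h1 : q i = 0 := hq0 i hi
        have h2 : q (i - 1) = 0 := hq0 _ (by omega)
        simp [h1, h2]
      · simp_rw [add_mul]
        rw [Finset.sum_add_distrib, mul_add]
        congr 1
        · rw [Finset.sum_mul, show j + (k + 1) + 1 = (j + k + 1) + 1 by ring,
            Finset.sum_range_succ' _ (j + k + 1)]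
          simp only [if_pos, zero_mul, add_zero]
          refine Finset.sum_congr rfl fun i _ => ?_
          rw [if_neg (Nat.succ_ne_zero i), Nat.add_sub_cancel,
            show j + (k + 1) - (i + 1) = j + k - i by omega]
          ring
        · rw [Finset.sum_mul, show j + (k + 1) + 1 = (j + k + 1) + 1 by ring,
            Finset.sum_range_succ _ (j + k + 1),
            if_neg (by omega), zero_mul, add_zero]
          refine Finset.sum_congr rfl fun i hi => ?_
          have := Finset.mem_range.1 hi
          rw [if_pos (by omega), show j + (k + 1) - i = (j + k - i) + 1 by omega, pow_succ]
          ring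
    | add x _ y _ hx hy =>
      obtain ⟨q, hq, hq0, rfl⟩ := hx
      obtain ⟨p, hp, hp0, rfl⟩ := hy
      refine ⟨fun i => q i + p i, fun i => Ideal.add_mem _ (hq i) (hp i), fun i hi => by
        simp only [hq0 i hi, hp0 i hi, add_zero], ?_⟩
      rw [← Finset.sum_add_distrib]
      refine Finset.sum_congr rfl fun i _ => ?_
      ring

lemma ZN.inter {A : Type*} [CommRing A] (m Q : Ideal A) (τ : A) (hm : m = Q ⊔ Ideal.span {τ})
    (hP : ∀ (e : ℕ) (q : ℕ → A), (∀ i, q i ∈ Q ^ i) →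
      ∑ i ∈ Finset.range (e + 1), q i * τ ^ (e - i) ∈ m ^ (e + 1) → ∀ i ≤ e, q i ∈ m * Q ^ i)
    (j k : ℕ) (h : A) (hj : h ∈ Q ^ j) (hr : h ∈ m ^ (j + k)) : h ∈ Q ^ j * m ^ k := by
  have hτ : τ ∈ m := by rw [hm]; exact Ideal.mem_sup_right (Ideal.mem_span_singleton_self τ)
  have hQm : Q ≤ m := by rw [hm]; exact le_sup_left
  induction k with
  | zero => simpa using hj
  | succ k ih =>
    obtain ⟨q, hq, hq0, he⟩ := ZN.rep m Q τ hm j k h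
      (ih (Ideal.pow_le_pow_right (by omega) hr))
    have h1 := hP (j + k) q hq (by rw [← he]; exact hr)
    rw [he]
    refine Ideal.sum_mem _ fun i hi => ?_
    by_cases hij : i < j
    · rw [hq0 i hij, zero_mul]; exact zero_mem _
    · have hi' := Finset.mem_range.1 hi
      have h2 := Ideal.mul_mem_mul (h1 i (by omega)) (Ideal.pow_mem_pow hτ (j + k - i))
      refine (?_ : m * Q ^ i * m ^ (j + k - i) ≤ _) h2
      obtain ⟨l, rfl⟩ := Nat.exists_eq_add_of_le (not_lt.1 hij)
      calc m * Q ^ (j + l) * m ^ (j + k - (j + l))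
          = Q ^ j * (m * Q ^ l * m ^ (j + k - (j + l))) := by rw [pow_add]; ring
        _ ≤ Q ^ j * (m * m ^ l * m ^ (j + k - (j + l))) := by gcongr
        _ = Q ^ j * m ^ (k + 1) := by
          rw [← pow_succ', ← pow_add]
          congr 2
          omega

lemma ZN.cancel_step {A : Type*} [CommRing A] (m Q : Ideal A) (τ : A)
    (hm : m = Q ⊔ Ideal.span {τ})
    (hP : ∀ (e : ℕ) (q : ℕ → A), (∀ i, q i ∈ Q ^ i) →
      ∑ i ∈ Finset.range (e + 1), q i * τ ^ (e - i) ∈ m ^ (e + 1) → ∀ i ≤ e, q i ∈ m * Q ^ i)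
    (j r : ℕ) (hjr : j ≤ r + 1) (g : A) (hg : g ∈ m ^ r) (h : τ * g ∈ Q ^ j ⊔ m ^ (r + 2)) :
    g ∈ Q ^ j ⊔ m ^ (r + 1) := by
  classical
  have hτ : τ ∈ m := by rw [hm]; exact Ideal.mem_sup_right (Ideal.mem_span_singleton_self τ)
  have hQm : Q ≤ m := by rw [hm]; exact le_sup_left
  obtain ⟨q, hq, -, he⟩ := ZN.rep m Q τ hm 0 r g (by simpa using hg)
  simp only [zero_add] at he
  let g1 := ∑ i ∈ Finset.range (r + 1), (if i < j then q i else 0) * τ ^ (r - i)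
  let g2 := ∑ i ∈ Finset.range (r + 1), (if i < j then 0 else q i) * τ ^ (r - i)
  have hg12 : g = g1 + g2 := by
    rw [he, ← Finset.sum_add_distrib]
    refine Finset.sum_congr rfl fun i _ => ?_
    split_ifs <;> ring
  have hg2 : g2 ∈ Q ^ j := by
    refine Ideal.sum_mem _ fun i _ => Ideal.mul_mem_right _ _ ?_
    split_ifs with hi
    · exact zero_mem _
    · exact Ideal.pow_le_pow_right (not_lt.1 hi) (hq i)
  have hg1m : g1 ∈ m ^ r := by
    refine Ideal.sum_mem _ fun i hi => ?_
    have hi' := Finset.mem_range.1 hi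
    have : (if i < j then q i else 0) * τ ^ (r - i) ∈ m ^ i * m ^ (r - i) := by
      refine Ideal.mul_mem_mul ?_ (Ideal.pow_mem_pow hτ _)
      split_ifs
      · exact Ideal.pow_right_mono hQm i (hq i)
      · exact zero_mem _
    rw [← pow_add] at this
    rwa [show i + (r - i) = r by omega] at this
  obtain ⟨u, hu, v, hv, huv⟩ := Submodule.mem_sup.1 h
  have hu1 : u - τ * g2 ∈ Q ^ j := Ideal.sub_mem _ hu (Ideal.mul_mem_left _ _ hg2)
  have hu2 : u - τ * g2 = τ * g1 - v := by
    rw [hg12] at huv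
    linear_combination huv
  have hu3 : u - τ * g2 ∈ m ^ (j + (r + 1 - j)) := by
    rw [hu2, show j + (r + 1 - j) = r + 1 by omega]
    refine Ideal.sub_mem _ ?_ (Ideal.pow_le_pow_right (by omega) hv)
    rw [pow_succ']
    exact Ideal.mul_mem_mul hτ hg1m
  obtain ⟨p, hp, hp0, hpe⟩ := ZN.rep m Q τ hm j (r + 1 - j) _
    (ZN.inter m Q τ hm hP j _ _ hu1 hu3)
  rw [show j + (r + 1 - j) = r + 1 by omega] at hpe
  have h5 := hP (r + 1) (fun i => (if i < j then (if i ≤ r then q i else 0) else 0) - p i)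
    (fun i => by
      refine Ideal.sub_mem _ ?_ (hp i)
      split_ifs
      · exact hq i
      · exact zero_mem _
      · exact zero_mem _) (by
    have h6 : ∑ i ∈ Finset.range (r + 1 + 1),
        ((if i < j then (if i ≤ r then q i else 0) else 0) - p i) * τ ^ (r + 1 - i) = v := by
      simp_rw [sub_mul]
      rw [Finset.sum_sub_distrib, ← hpe, hu2, Finset.sum_range_succ]
      simp only [show ¬ (r + 1 ≤ r) by omega, if_false, ite_self, zero_mul, add_zero]
      have : ∑ i ∈ Finset.range (r + 1),
          (if i < j then (if i ≤ r then q i else 0) else 0) * τ ^ (r + 1 - i) = τ * g1 := by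
        rw [Finset.mul_sum]
        refine Finset.sum_congr rfl fun i hi => ?_
        have hi' := Finset.mem_range.1 hi
        rw [if_pos (show i ≤ r by omega), show r + 1 - i = (r - i) + 1 by omega, pow_succ]
        ring
      rw [this]
      ring
    rw [h6]
    exact hv)
  rw [hg12, add_comm g1 g2]
  refine Submodule.add_mem_sup hg2 ?_
  refine Ideal.sum_mem _ fun i hi => ?_
  have hi' := Finset.mem_range.1 hi
  split_ifs with hij
  · have h7 := h5 i (by omega)
    simp only [if_pos hij, if_pos (show i ≤ r by omega), hp0 i hij, sub_zero] at h7
    have h8 := Ideal.mul_mem_mul h7 (Ideal.pow_mem_pow hτ (r - i))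
    refine (?_ : m * Q ^ i * m ^ (r - i) ≤ _) h8
    calc m * Q ^ i * m ^ (r - i) ≤ m * m ^ i * m ^ (r - i) := by gcongr
      _ = m ^ (r + 1) := by
          rw [← pow_succ', ← pow_add]
          congr 1
          omega
  · rw [zero_mul]; exact zero_mem _

lemma ZN.cancel {A : Type*} [CommRing A] (m Q : Ideal A) (τ : A)
    (hm : m = Q ⊔ Ideal.span {τ})
    (hP : ∀ (e : ℕ) (q : ℕ → A), (∀ i, q i ∈ Q ^ i) →
      ∑ i ∈ Finset.range (e + 1), q i * τ ^ (e - i) ∈ m ^ (e + 1) → ∀ i ≤ e, q i ∈ m * Q ^ i)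
    (j M : ℕ) (g : A) (h : τ * g ∈ Q ^ j ⊔ m ^ (M + 1)) :
    g ∈ Q ^ j ⊔ m ^ M := by
  have hQm : Q ≤ m := by rw [hm]; exact le_sup_left
  have key : ∀ r ≤ M, g ∈ Q ^ j ⊔ m ^ r := by
    intro r hr
    induction r with
    | zero => simp
    | succ r ih =>
      obtain ⟨g1, hg1, g2, hg2, rfl⟩ := Submodule.mem_sup.1 (ih (by omega))
      refine Ideal.add_mem _ (Ideal.mem_sup_left hg1) ?_
      have h2 : τ * g2 ∈ Q ^ j ⊔ m ^ (r + 2) := by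
        have h3 : τ * g2 = τ * (g1 + g2) - τ * g1 := by ring
        rw [h3]
        refine Ideal.sub_mem _ ?_ (Ideal.mem_sup_left (Ideal.mul_mem_left _ _ hg1))
        have h5 : m ^ (M + 1) ≤ m ^ (r + 2) := Ideal.pow_le_pow_right (by omega)
        exact (sup_le_sup_left h5 (Q ^ j) : _ ≤ _) h
      by_cases hj : j ≤ r + 1
      · exact ZN.cancel_step m Q τ hm hP j r hj g2 hg2 h2
      · refine Ideal.mem_sup_right ?_
        have h5 : Q ^ j ≤ Q ^ (r + 1) := Ideal.pow_le_pow_right (by omega)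
        have h4 := ZN.cancel_step m Q τ hm hP (r + 1) r le_rfl g2 hg2
          ((sup_le_sup_right h5 (m ^ (r + 2)) : _ ≤ _) h2)
        exact (sup_le (Ideal.pow_right_mono hQm _) le_rfl) h4
  exact key M le_rfl

lemma ZN.finish {A : Type*} [CommRing A] (m Q : Ideal A) (τ : A)
    (hm : m = Q ⊔ Ideal.span {τ})
    (hP : ∀ (e : ℕ) (q : ℕ → A), (∀ i, q i ∈ Q ^ i) →
      ∑ i ∈ Finset.range (e + 1), q i * τ ^ (e - i) ∈ m ^ (e + 1) → ∀ i ≤ e, q i ∈ m * Q ^ i)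
    (a n : ℕ) (f σ : A) (hσ : σ - τ ^ a ∈ Q) (h : σ * f ∈ Q ^ n) : f ∈ m ^ n := by
  have hQm : Q ≤ m := by rw [hm]; exact le_sup_left
  have hpow : ∀ (a j M : ℕ) (g : A), τ ^ a * g ∈ Q ^ j ⊔ m ^ (M + a) → g ∈ Q ^ j ⊔ m ^ M := by
    intro a
    induction a with
    | zero => intro j M g h; simpa using h
    | succ a ih =>
      intro j M g h
      apply ih
      apply ZN.cancel m Q τ hm hP
      rw [← mul_assoc, ← pow_succ']
      exact h
  have key : ∀ j ≤ n, f ∈ Q ^ j ⊔ m ^ (n + (n - j) * a) := by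
    intro j hj
    induction j with
    | zero => simp
    | succ j ih =>
      apply hpow a
      have h1 : τ ^ a * f = σ * f - (σ - τ ^ a) * f := by ring
      rw [h1]
      refine Ideal.sub_mem _ (Ideal.mem_sup_left (Ideal.pow_le_pow_right hj h)) ?_
      obtain ⟨f1, hf1, f2, hf2, rfl⟩ := Submodule.mem_sup.1 (ih (by omega))
      rw [mul_add]
      refine Submodule.add_mem_sup ?_ ?_
      · rw [pow_succ']
        exact Ideal.mul_mem_mul hσ hf1
      · refine Ideal.mul_mem_left _ _ ?_
        have : n + (n - j) * a = n + (n - (j + 1)) * a + a := by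
          rw [show n - j = (n - (j + 1)) + 1 by omega]; ring
        rwa [← this]
  have := key n le_rfl
  simp only [Nat.sub_self, zero_mul, add_zero] at this
  exact (sup_le (Ideal.pow_right_mono hQm _) le_rfl) this

open IsLocalRing in
lemma ZN.dim_one {D : Type*} [CommRing D] [IsDomain D] [IsLocalRing D] [IsNoetherianRing D]
    (s : D) (hs : s ≠ 0) (hsm : s ∈ maximalIdeal D)
    (h : ∀ q : Ideal D, q.IsPrime → q ≠ ⊥ → s ∈ q) (q : Ideal D) (hq : q.IsPrime) (hq0 : q ≠ ⊥) :
    q = maximalIdeal D := by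
  have two : ∀ p q : Ideal D, p.IsPrime → q.IsPrime → q ≠ ⊥ → q < p → p.height ≤ 1 → False := by
    intro p q hp hq hq0 hqp h1
    have h2 := Ideal.height_add_one_le_of_lt_of_isPrime hqp
    have h3 := Ideal.height_add_one_le_of_lt_of_isPrime (bot_lt_iff_ne_bot.2 hq0)
    rw [Ideal.height_bot, zero_add] at h3
    have h4 : (1 : ℕ∞) + 1 ≤ 1 := (add_le_add_left h3 1).trans (h2.trans h1)
    exact absurd h4 (by norm_num)
  have hfin := Ideal.finite_minimalPrimes_of_isNoetherianRing D (Ideal.span {s})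
  by_cases hm : maximalIdeal D ∈ (Ideal.span {s}).minimalPrimes
  · by_contra hne
    exact two _ q inferInstance hq hq0 (lt_of_le_of_ne (le_maximalIdeal hq.ne_top) hne)
      (Ideal.height_le_one_of_isPrincipal_of_mem_minimalPrimes _ _ hm)
  · exfalso
    have h1 : ¬ ((maximalIdeal D : Set D) ⊆ ⋃ p ∈ (Ideal.span {s}).minimalPrimes, (p : Set D)) := by
      rw [Ideal.subset_union_prime_finite (f := fun p => p) hfin ⊥ ⊥ (fun p hp _ _ => hp.1.1)]
      rintro ⟨p, hp, hle⟩
      have : maximalIdeal D = p := le_antisymm hle (le_maximalIdeal hp.1.1.ne_top)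
      exact hm (this ▸ hp)
    obtain ⟨z, hz, hzn⟩ := Set.not_subset.1 h1
    simp only [Set.mem_iUnion, not_exists, SetLike.mem_coe] at hzn
    obtain ⟨p, hp, hpm⟩ := Ideal.exists_minimalPrimes_le
      (I := Ideal.span {z}) (J := maximalIdeal D) (by
        rw [Ideal.span_le, Set.singleton_subset_iff]; exact hz)
    have hzp : z ∈ p := hp.1.2 (Ideal.mem_span_singleton_self z)
    obtain ⟨p0, hp0, -⟩ := Ideal.exists_minimalPrimes_le
      (I := Ideal.span {s}) (J := maximalIdeal D) (by
        rw [Ideal.span_le, Set.singleton_subset_iff]; exact hsm)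
    have hpb : p ≠ ⊥ := by
      rintro rfl
      rw [Ideal.mem_bot] at hzp
      exact hzn p0 hp0 (hzp ▸ zero_mem p0)
    have := hp.1.1
    obtain ⟨r, hr, hrp⟩ := Ideal.exists_minimalPrimes_le
      (I := Ideal.span {s}) (J := p) (by
        rw [Ideal.span_le, Set.singleton_subset_iff]; exact h p hp.1.1 hpb)
    refine two p r hp.1.1 hr.1.1 ?_ (lt_of_le_of_ne hrp ?_)
      (Ideal.height_le_one_of_isPrincipal_of_mem_minimalPrimes _ _ hp)
    · rintro rfl
      exact hs (by simpa using hr.1.2 (Ideal.mem_span_singleton_self s))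
    · rintro rfl
      exact hzn r hr hzp

lemma ZN.finiteLength_of_killed {D M : Type*} [CommRing D] [AddCommGroup M] [Module D M]
    [Module.Finite D M] (b : D) (hb : IsFiniteLength D (D ⧸ Ideal.span {b}))
    (hk : ∀ x : M, b • x = 0) : IsFiniteLength D M := by
  obtain ⟨n, g, hg⟩ := Module.Finite.exists_fin (R := D) (M := M)
  rw [isFiniteLength_iff_isNoetherian_isArtinian] at hb
  obtain ⟨_, _⟩ := hb
  have h1 : IsFiniteLength D (Fin n → D ⧸ Ideal.span {b}) := by
    rw [isFiniteLength_iff_isNoetherian_isArtinian]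
    exact ⟨inferInstance, inferInstance⟩
  let f : (Fin n → D ⧸ Ideal.span {b}) →ₗ[D] M :=
    ∑ i, ((Submodule.liftQ (Ideal.span {b}) (LinearMap.toSpanSingleton D M (g i)) (by
      rw [Ideal.span, Submodule.span_le, Set.singleton_subset_iff]
      simp [hk])).comp (LinearMap.proj i))
  refine h1.of_surjective (f := f) ?_
  rw [← LinearMap.range_eq_top, eq_top_iff, ← hg, Submodule.span_le]
  rintro _ ⟨i, rfl⟩
  refine ⟨Pi.single i (Submodule.Quotient.mk 1), ?_⟩
  simp only [f, LinearMap.sum_apply, LinearMap.comp_apply, LinearMap.proj_apply]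
  rw [Finset.sum_eq_single i]
  · rw [Pi.single_eq_same, Submodule.liftQ_apply]
    simp
  · intro j _ hj
    rw [Pi.single_eq_of_ne hj, map_zero]
  · simp

lemma ZN.length_map {D X M : Type*} [CommRing D] [AddCommGroup M] [Module D M]
    [AddCommGroup X] [Module D X] (j : X →ₗ[D] M) (hj : Function.Injective j)
    (N : Submodule D X) :
    Module.length D (M ⧸ N.map j) = Module.length D (X ⧸ N) +
      Module.length D (M ⧸ LinearMap.range j) := by
  have hle : N.map j ≤ LinearMap.range j := LinearMap.map_le_range
  refine Module.length_eq_add_of_exact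
    (N.mapQ (N.map j) j (Submodule.map_le_iff_le_comap.1 le_rfl))
    (Submodule.factor hle) ?_ (Submodule.factor_surjective hle) ?_
  · rw [← LinearMap.ker_eq_bot, eq_bot_iff]
    rintro x hx
    obtain ⟨x, rfl⟩ := Submodule.mkQ_surjective _ x
    rw [LinearMap.mem_ker, Submodule.mkQ_apply, Submodule.mapQ_apply,
      Submodule.Quotient.mk_eq_zero] at hx
    obtain ⟨y, hy, hyx⟩ := hx
    rw [Submodule.mem_bot, Submodule.mkQ_apply, Submodule.Quotient.mk_eq_zero]
    exact hj hyx ▸ hy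
  · intro x
    obtain ⟨x, rfl⟩ := Submodule.mkQ_surjective _ x
    constructor
    · intro h
      have h' : (Submodule.Quotient.mk x : M ⧸ LinearMap.range j) = 0 := h
      rw [Submodule.Quotient.mk_eq_zero] at h'
      obtain ⟨y, rfl⟩ := h'
      exact ⟨Submodule.Quotient.mk y, rfl⟩
    · rintro ⟨y, hy⟩
      obtain ⟨y, rfl⟩ := Submodule.mkQ_surjective _ y
      rw [← hy]
      change (Submodule.Quotient.mk (j y) : M ⧸ LinearMap.range j) = 0
      rw [Submodule.Quotient.mk_eq_zero]
      exact ⟨y, rfl⟩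

lemma ZN.length_eq {D M : Type*} [CommRing D] [AddCommGroup M] [Module D M]
    (j : D →ₗ[D] M) (hj : Function.Injective j) (s : D) (hs : Function.Injective fun x : M => s • x)
    (hfin : Module.length D (M ⧸ LinearMap.range j) ≠ ⊤) :
    Module.length D (M ⧸ LinearMap.range (LinearMap.lsmul D M s)) =
      Module.length D (D ⧸ Ideal.span {s}) := by
  have h1 := ZN.length_map j hj (Ideal.span {s})
  have h2 := ZN.length_map (LinearMap.lsmul D M s) hs (LinearMap.range j)
  have h3 : Submodule.map j (Ideal.span {s}) =
      (LinearMap.range j).map (LinearMap.lsmul D M s) := by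
    ext x
    constructor
    · rintro ⟨y, hy, rfl⟩
      obtain ⟨a, rfl⟩ := Ideal.mem_span_singleton'.1 hy
      exact ⟨j a, ⟨a, rfl⟩, by rw [LinearMap.lsmul_apply, ← map_smul, smul_eq_mul, mul_comm]⟩
    · rintro ⟨_, ⟨a, rfl⟩, rfl⟩
      exact ⟨s * a, Ideal.mul_mem_right _ _ (Ideal.mem_span_singleton_self s), by
        rw [LinearMap.lsmul_apply, ← map_smul, smul_eq_mul]⟩
  rw [h3, h2, add_comm] at h1
  exact WithTop.add_right_cancel hfin h1

lemma ZN.chain_bound {D W : Type*} [CommRing D] [IsDomain D] [IsNoetherianRing D] [CommRing W]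
    [IsDomain W] [Algebra D W] (hinj : Function.Injective (algebraMap D W))
    (hkill : ∀ w : W, ∃ b : D, b ≠ 0 ∧ ∃ c : D, b • w = algebraMap D W c)
    (hfl : ∀ b : D, b ≠ 0 → IsFiniteLength D (D ⧸ Ideal.span {b}))
    (s : D) (hs : s ≠ 0) (L : ℕ) (w : ℕ → W)
    (hw : ∀ i < L, w i ∈ Ideal.span {w (i + 1)} ∧ w (i + 1) ∉ Ideal.span {w i})
    (hsw : algebraMap D W s ∈ Ideal.span {w 0}) :
    (L : ℕ∞) ≤ Module.length D (D ⧸ Ideal.span {s}) := by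
  classical
  let T : Finset W := insert 1 ((Finset.range (L + 1)).image w)
  let M : Submodule D W := Submodule.span D (T : Set W)
  have h1M : (1 : W) ∈ M := Submodule.subset_span (by simp [T])
  have hwM : ∀ i ≤ L, w i ∈ M := fun i hi => Submodule.subset_span (by
    simp only [T, Finset.coe_insert, Finset.coe_image]
    exact Or.inr ⟨i, by simpa [Nat.lt_succ_iff] using hi, rfl⟩)
  have hMfin : Module.Finite D M := Module.Finite.span_of_finite D T.finite_toSet
  have hcommon : ∀ T : Finset W, ∃ b : D, b ≠ 0 ∧ ∀ x ∈ T, ∃ c, b • x = algebraMap D W c := by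
    intro T
    induction T using Finset.induction_on with
    | empty => exact ⟨1, one_ne_zero, by simp⟩
    | insert x T _ ih =>
      obtain ⟨b, hb, h⟩ := ih
      obtain ⟨b', hb', c', h'⟩ := hkill x
      refine ⟨b * b', mul_ne_zero hb hb', fun y hy => ?_⟩
      rcases Finset.mem_insert.1 hy with rfl | hy
      · exact ⟨b * c', by rw [mul_smul, h', map_mul, Algebra.smul_def]⟩
      · obtain ⟨c, hc⟩ := h y hy
        exact ⟨b' * c, by rw [mul_comm, mul_smul, hc, map_mul, Algebra.smul_def]⟩
  obtain ⟨b, hb, hbT⟩ := hcommon T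
  have hbM : ∀ x ∈ M, ∃ c, b • x = algebraMap D W c := by
    intro x hx
    induction hx using Submodule.span_induction with
    | mem x hx => exact hbT x hx
    | zero => exact ⟨0, by simp⟩
    | add x y _ _ hx hy =>
      obtain ⟨c, hc⟩ := hx
      obtain ⟨d, hd⟩ := hy
      exact ⟨c + d, by rw [smul_add, hc, hd, map_add]⟩
    | smul a x _ hx =>
      obtain ⟨c, hc⟩ := hx
      exact ⟨a * c, by rw [smul_comm, hc, map_mul, Algebra.smul_def]⟩
  let j : D →ₗ[D] M := LinearMap.toSpanSingleton D M ⟨1, h1M⟩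
  have hj1 : ∀ c, ((j c : M) : W) = algebraMap D W c := fun c => by
    simp [j, Algebra.smul_def]
  have hj : Function.Injective j := fun c d h => hinj (by rw [← hj1, ← hj1, h])
  have hsinj : Function.Injective fun x : M => s • x := by
    intro x y h
    have h2 : algebraMap D W s * (x : W) = algebraMap D W s * (y : W) := by
      rw [← Algebra.smul_def, ← Algebra.smul_def]
      exact congrArg Subtype.val h
    have h3 : algebraMap D W s ≠ 0 := fun h => hs (hinj (by rw [h, map_zero]))
    exact Subtype.ext (mul_left_cancel₀ h3 h2)
  have hfin : Module.length D (M ⧸ LinearMap.range j) ≠ ⊤ := by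
    rw [Module.length_ne_top_iff]
    refine ZN.finiteLength_of_killed b (hfl b hb) fun x => ?_
    obtain ⟨x, rfl⟩ := Submodule.mkQ_surjective _ x
    rw [← map_smul, Submodule.mkQ_apply, Submodule.Quotient.mk_eq_zero]
    obtain ⟨c, hc⟩ := hbM x x.2
    exact ⟨c, Subtype.ext (by rw [hj1, ← hc]; rfl)⟩
  rw [← ZN.length_eq j hj s hsinj hfin]
  let N : ℕ → Submodule D (M ⧸ LinearMap.range (LinearMap.lsmul D M s)) := fun i =>
    (((Ideal.span {w i}).restrictScalars D).comap M.subtype).map (Submodule.mkQ _)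
  have hmono : ∀ i ≤ L, algebraMap D W s ∈ Ideal.span {w i} := by
    intro i
    induction i with
    | zero => intro _; exact hsw
    | succ i ih =>
      intro hi
      have h1 : Ideal.span {w i} ≤ Ideal.span {w (i + 1)} := by
        rw [Ideal.span_le, Set.singleton_subset_iff]; exact (hw i hi).1
      exact h1 (ih (by omega))
  have hlt : ∀ i < L, N i < N (i + 1) := by
    intro i hi
    have h1 : Ideal.span {w i} ≤ Ideal.span {w (i + 1)} := by
      rw [Ideal.span_le, Set.singleton_subset_iff]; exact (hw i hi).1
    refine lt_of_le_of_ne (Submodule.map_mono (Submodule.comap_mono fun x hx => h1 hx)) fun he => ?_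
    have h2 : Submodule.mkQ (LinearMap.range (LinearMap.lsmul D M s)) ⟨w (i + 1), hwM _ hi⟩ ∈
        N (i + 1) := ⟨_, Ideal.mem_span_singleton_self (w (i + 1)), rfl⟩
    rw [← he] at h2
    obtain ⟨y, hy, hye⟩ := h2
    rw [← sub_eq_zero, ← map_sub, Submodule.mkQ_apply, Submodule.Quotient.mk_eq_zero] at hye
    obtain ⟨x, hx⟩ := hye
    have h3 : algebraMap D W s * (x : W) = (y : W) - w (i + 1) := by
      rw [← Algebra.smul_def]
      exact congrArg Subtype.val hx
    have hy' : (y : W) ∈ Ideal.span {w i} := hy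
    refine (hw i hi).2 ?_
    have h4 : w (i + 1) = (y : W) - algebraMap D W s * (x : W) := by rw [h3]; ring
    rw [h4]
    exact Ideal.sub_mem _ hy' (Ideal.mul_mem_right _ _ (hmono i hi.le))
  let ser : LTSeries (Submodule D (M ⧸ LinearMap.range (LinearMap.lsmul D M s))) :=
    { length := L, toFun := fun i => N i, step := fun i => hlt i i.2 }
  have h5 : ((L : ℕ) : WithBot ℕ∞) ≤ Order.krullDim _ := Order.LTSeries.length_le_krullDim ser
  rw [← Module.coe_length] at h5
  exact_mod_cast h5

universe u

open IsLocalRing in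
lemma ZN.exists_dvr {D : Type u} [CommRing D] [IsDomain D] [IsLocalRing D] [IsNoetherianRing D]
    (s : D) (hs : s ≠ 0) (hsm : s ∈ maximalIdeal D)
    (h : ∀ q : Ideal D, q.IsPrime → q ≠ ⊥ → s ∈ q) :
    ∃ (W : Type u) (_ : CommRing W) (_ : IsDomain W) (_ : IsLocalRing W) (φ : D →+* W)
      (_ : IsLocalHom φ) (t v : W) (a : ℕ), maximalIdeal W = Ideal.span {t} ∧ t ≠ 0 ∧
        v * φ s = t ^ a := by
  classical
  have hdim := ZN.dim_one s hs hsm h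
  have hk : Ring.KrullDimLE 1 D := by
    rw [Ring.krullDimLE_one_iff_of_isPrime_bot]
    intro I hI hI0
    rw [hdim I hI0 hI]
    infer_instance
  have hfl : ∀ b : D, b ≠ 0 → IsFiniteLength D (D ⧸ Ideal.span {b}) := fun b hb =>
    isFiniteLength_quotient_span_singleton D (mem_nonZeroDivisors_of_ne_zero hb)
  let K := FractionRing D
  obtain ⟨V, hV, hloc⟩ := IsLocalRing.exists_factor_valuationRing (algebraMap D K)
  let φ : D →+* V := (algebraMap D K).codRestrict V.toSubring hV
  have hφ : IsLocalHom φ := hloc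
  let _ : Algebra D V := φ.toAlgebra
  have hinj : Function.Injective (algebraMap D V) := fun x y hxy =>
    IsFractionRing.injective D K (congrArg Subtype.val hxy)
  have hkill : ∀ w : V, ∃ b : D, b ≠ 0 ∧ ∃ c : D, b • w = algebraMap D V c := by
    intro w
    obtain ⟨c, b, hb, hcb⟩ := IsFractionRing.div_surjective (A := D) (w : K)
    refine ⟨b, nonZeroDivisors.ne_zero hb, c, ?_⟩
    apply Subtype.ext
    rw [Algebra.smul_def]
    change algebraMap D K b * (w : K) = algebraMap D K c
    have hb' : algebraMap D K b ≠ 0 := fun h0 =>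
      nonZeroDivisors.ne_zero hb (IsFractionRing.injective D K (by rw [h0, map_zero]))
    rw [← hcb, mul_div_cancel₀ _ hb']
  have hbound := ZN.chain_bound hinj hkill hfl s hs
  have hlen : Module.length D (D ⧸ Ideal.span {s}) ≠ ⊤ := Module.length_ne_top_iff.2 (hfl s hs)
  obtain ⟨B, hB⟩ := ENat.ne_top_iff_exists.1 hlen
  rw [← hB] at hbound
  have hsV : algebraMap D V s ∈ maximalIdeal V := by
    rw [mem_maximalIdeal, mem_nonunits_iff]
    intro hu
    exact (mem_maximalIdeal _).1 hsm (hφ.map_nonunit s hu)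
  have hsV0 : algebraMap D V s ≠ 0 := fun h => hs (hinj (by rw [h, map_zero]))
  let Pr : ℕ → Prop := fun L => ∃ w : ℕ → V,
    (∀ i < L, w i ∈ Ideal.span {w (i + 1)} ∧ w (i + 1) ∉ Ideal.span {w i}) ∧
    algebraMap D V s ∈ Ideal.span {w 0} ∧ w L ∈ maximalIdeal V
  have hPr0 : Pr 0 := ⟨fun _ => algebraMap D V s, by simp, Ideal.mem_span_singleton_self _, hsV⟩
  have hPrB : ∀ L, Pr L → L ≤ B := by
    rintro L ⟨w, h1, h2, -⟩
    exact_mod_cast hbound L w h1 h2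
  obtain ⟨w, hw1, hw2, hw3⟩ := Nat.findGreatest_spec (P := Pr) (Nat.zero_le B) hPr0
  set L := Nat.findGreatest Pr B with hL
  set t := w L with ht
  have hmt : maximalIdeal V = Ideal.span {t} := by
    apply le_antisymm
    · intro y hy
      by_contra hyt
      have hty : t ∈ Ideal.span {y} := by
        rw [Ideal.mem_span_singleton] at hyt ⊢
        exact (ValuationRing.dvd_total t y).resolve_left hyt
      have : Pr (L + 1) := by
        refine ⟨fun i => if i ≤ L then w i else y, ?_, ?_, ?_⟩
        · intro i hi
          by_cases hiL : i < L
          · simp only [if_pos hiL.le, if_pos (show i + 1 ≤ L by omega)]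
            exact hw1 i hiL
          · have : i = L := by omega
            rw [this]
            simp only [le_refl, if_true, if_neg (show ¬ (L + 1 ≤ L) by omega)]
            exact ⟨hty, hyt⟩
        · simpa using hw2
        · simpa using hy
      have h3 := Nat.le_findGreatest (hPrB _ this) this
      omega
    · rw [Ideal.span_le, Set.singleton_subset_iff]
      exact hw3
  have ht0 : t ≠ 0 := by
    intro h0
    rw [hmt, h0, Ideal.mem_span_singleton, zero_dvd_iff] at hsV
    exact hsV0 hsV
  have htu : ¬ IsUnit t := fun hu => (mem_maximalIdeal _).1 hw3 hu
  have hnd : ∃ i, ¬ (t ^ i ∣ algebraMap D V s) := by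
    by_contra! hall
    have := hbound (B + 1) (fun i => t ^ (B + 1 - i)) (by
      intro i hi
      rw [show B + 1 - i = (B + 1 - (i + 1)) + 1 by omega]
      rw [Ideal.mem_span_singleton, Ideal.mem_span_singleton]
      refine ⟨pow_dvd_pow _ (Nat.le_succ _), ?_⟩
      rintro ⟨c, hc⟩
      rw [pow_succ, mul_assoc] at hc
      have := mul_left_cancel₀ (pow_ne_zero _ ht0) ((mul_one _).trans hc)
      exact htu (IsUnit.of_mul_eq_one _ this.symm)) (by
      rw [Ideal.mem_span_singleton]
      exact hall _)
    have h4 : B + 1 ≤ B := by exact_mod_cast this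
    omega
  have hfind := Nat.find_spec hnd
  have hpos : Nat.find hnd ≠ 0 := by
    intro h0
    rw [h0] at hfind
    simp at hfind
  obtain ⟨a, ha⟩ := Nat.exists_eq_succ_of_ne_zero hpos
  have hdiv : t ^ a ∣ algebraMap D V s := by
    by_contra hcon
    have := Nat.find_min' hnd hcon
    omega
  obtain ⟨u, hu⟩ := hdiv
  have huu : IsUnit u := by
    by_contra hun
    have : u ∈ maximalIdeal V := (mem_maximalIdeal _).2 hun
    rw [hmt, Ideal.mem_span_singleton] at this
    obtain ⟨c, rfl⟩ := this
    apply hfind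
    rw [ha, hu]
    exact ⟨c, by rw [pow_succ]; ring⟩
  obtain ⟨u, rfl⟩ := huu
  refine ⟨V, inferInstance, inferInstance, inferInstance, φ, hφ, t, (↑u⁻¹ : V), a, hmt, ht0, ?_⟩
  change (↑u⁻¹ : V) * algebraMap D V s = t ^ a
  rw [hu, mul_comm, mul_assoc, Units.mul_inv, mul_one]

open MvPolynomial IsLocalRing in
lemma ZN.core {R : Type*} [CommRing R] [IsLocalRing R] [IsNoetherianRing R]
    {κ : Type*} [Finite κ] (x : κ → R) (hx : Ideal.span (Set.range x) = maximalIdeal R)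
    (hd : (Nat.card κ : ℕ∞) ≤ (maximalIdeal R).height)
    {W : Type*} [CommRing W] [IsDomain W] [IsLocalRing W] (ψ : R →+* W) (hψ : IsLocalHom ψ)
    (t v : W) (a : ℕ) (ht : maximalIdeal W = Ideal.span {t}) (ht0 : t ≠ 0) (s : R)
    (hs : v * ψ s = t ^ a) (n : ℕ) (f : R) (hf : s * f ∈ RingHom.ker ψ ^ n) :
    f ∈ maximalIdeal R ^ n := by
  classical
  let π : MvPolynomial W R →+* W := eval₂Hom ψ id
  have hπX : ∀ w, π (X w) = w := fun w => by simp [π]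
  have hπC : ∀ r, π (C r) = ψ r := fun r => by simp [π]
  have hsurj : Function.Surjective π := fun w => ⟨X w, hπX w⟩
  obtain ⟨m', hm'⟩ : ∃ m', m' = (maximalIdeal W).comap π := ⟨_, rfl⟩
  obtain ⟨Q, hQ⟩ : ∃ Q, Q = RingHom.ker π := ⟨_, rfl⟩
  have hmax : m'.IsMaximal := hm' ▸ Ideal.comap_isMaximal_of_surjective π hsurj
  have hmem : ∀ y, y ∈ m' ↔ t ∣ π y := fun y => by
    rw [hm', Ideal.mem_comap, ht, Ideal.mem_span_singleton]
  have hQmem : ∀ y, y ∈ Q ↔ π y = 0 := fun y => by rw [hQ, RingHom.mem_ker]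
  have hcm : m'.comap C = maximalIdeal R := by
    ext r
    rw [hm', Ideal.mem_comap, Ideal.mem_comap, hπC, mem_maximalIdeal, mem_maximalIdeal,
      mem_nonunits_iff, mem_nonunits_iff, isUnit_map_iff]
  have hQm : Q ≤ m' := fun y hy => by
    rw [hmem, (hQmem y).1 hy]; exact dvd_zero t
  have hτm : (X t : MvPolynomial W R) ∈ m' := by rw [hmem, hπX]
  have hrep : ∀ y ∈ m', ∃ q ∈ Q, ∃ c, y = q + c * X t := by
    intro y hy
    obtain ⟨c, hc⟩ := (hmem y).1 hy
    refine ⟨y - X c * X t, ?_, X c, by ring⟩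
    rw [hQmem, map_sub, map_mul, hπX, hπX, hc]; ring
  have hm : m' = Q ⊔ Ideal.span {X t} := by
    apply le_antisymm
    · intro y hy
      obtain ⟨q, hq, c, rfl⟩ := hrep y hy
      exact Ideal.add_mem _ (Ideal.mem_sup_left hq) (Ideal.mem_sup_right
        (Ideal.mul_mem_left _ _ (Ideal.mem_span_singleton_self _)))
    · refine sup_le hQm ?_
      rw [Ideal.span_le, Set.singleton_subset_iff]
      exact hτm
  have hsq : ∀ y ∈ m' ^ 2, ∃ q ∈ m' * Q, ∃ c, y = q + c * X t ^ 2 := by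
    intro y hy
    rw [pow_two] at hy
    induction hy using Submodule.mul_induction_on' with
    | mem_mul_mem u hu w hw =>
      obtain ⟨q, hq, c, rfl⟩ := hrep w hw
      obtain ⟨q', hq', c', rfl⟩ := hrep u hu
      refine ⟨(q' + c' * X t) * q + (c * X t) * q', Ideal.add_mem _ (Ideal.mul_mem_mul hu hq)
        (Ideal.mul_mem_mul (Ideal.mul_mem_left _ _ hτm) hq'), c * c', by ring⟩
    | add u _ w _ hu hw =>
      obtain ⟨q, hq, c, rfl⟩ := hu
      obtain ⟨q', hq', c', rfl⟩ := hw
      exact ⟨q + q', Ideal.add_mem _ hq hq', c + c', by ring⟩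
  have hmulQ : m' * Q ≤ Q := Ideal.mul_le_right
  have hτ : ∀ c, c * X t ∈ Q ⊔ m' ^ 2 → c ∈ m' := by
    intro c hc
    obtain ⟨q, hq, y, hy, he⟩ := Submodule.mem_sup.1 hc
    obtain ⟨q', hq', d, rfl⟩ := hsq y hy
    have h1 := congrArg π he
    rw [map_add, map_add, map_mul, map_mul, map_pow, hπX, (hQmem q).1 hq,
      (hQmem q').1 (hmulQ hq'), zero_add, zero_add] at h1
    rw [hmem]
    refine ⟨π d, mul_right_cancel₀ ht0 ?_⟩
    rw [← h1]; ring
  have hQ2 : Q ⊓ m' ^ 2 ≤ m' * Q := by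
    rintro y ⟨hyQ, hy⟩
    obtain ⟨q, hq, c, rfl⟩ := hsq y hy
    have h1 := (hQmem _).1 hyQ
    rw [map_add, (hQmem q).1 (hmulQ hq), zero_add, map_mul, map_pow, hπX] at h1
    have hc : c ∈ Q := (hQmem c).2 ((mul_eq_zero.1 h1).resolve_right (pow_ne_zero _ ht0))
    refine Ideal.add_mem _ hq ?_
    rw [mul_comm c]
    exact Ideal.mul_mem_mul (Ideal.pow_mem_of_mem _ hτm 2 (by norm_num)) hc
  have hP := ZN.principle m' Q hQm (X t) hτm hτ hQ2
    (fun _ z hz hind _ F hF h b => ZN.quasiReg_poly x hx hd m' hcm z hz hind F hF h b)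
  refine ZN.contract x hx hd m' hcm n f ?_
  refine ZN.finish m' Q (X t) hm hP a n (C f) (X v * C s) ?_ ?_
  · rw [hQmem, map_sub, map_mul, map_pow, hπX, hπX, hπC, hs, sub_self]
  · rw [mul_assoc, ← C_mul]
    refine Ideal.mul_mem_left _ _ ?_
    have h1 : (RingHom.ker ψ).map (C : R →+* MvPolynomial W R) ≤ Q := by
      rw [Ideal.map_le_iff_le_comap]
      intro r hr
      rw [Ideal.mem_comap, hQmem, hπC]
      exact hr
    have h2 := Ideal.mem_map_of_mem (C : R →+* MvPolynomial W R) hf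
    rw [Ideal.map_pow] at h2
    exact Ideal.pow_right_mono h1 n h2

open IsLocalRing in
lemma ZN.main {R : Type*} [CommRing R] [IsLocalRing R] [IsNoetherianRing R]
    {κ : Type*} [Finite κ] (x : κ → R) (hx : Ideal.span (Set.range x) = maximalIdeal R)
    (hd : (Nat.card κ : ℕ∞) ≤ (maximalIdeal R).height)
    (P : Ideal R) [P.IsPrime] (s : R) (hs : s ∉ P) (n : ℕ) (f : R) (hf : s * f ∈ P ^ n) :
    f ∈ maximalIdeal R ^ n := by
  by_cases hu : IsUnit s
  · exact Ideal.pow_right_mono (le_maximalIdeal (Ideal.IsPrime.ne_top ‹_›)) n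
      ((Ideal.unit_mul_mem_iff_mem _ hu).1 hf)
  obtain ⟨P1, ⟨hP1, hPP1, hsP1⟩, hmaxi⟩ := set_has_maximal_iff_noetherian.2
    (inferInstanceAs (IsNoetherian R R)) {q : Ideal R | q.IsPrime ∧ P ≤ q ∧ s ∉ q}
    ⟨P, ‹_›, le_refl P, hs⟩
  have : Nontrivial (R ⧸ P1) := Ideal.Quotient.nontrivial_iff.2 hP1.ne_top
  have hlm : IsLocalHom (Ideal.Quotient.mk P1) :=
    .of_surjective _ Ideal.Quotient.mk_surjective
  have : IsLocalRing (R ⧸ P1) := .of_surjective' _ Ideal.Quotient.mk_surjective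
  have hs0 : Ideal.Quotient.mk P1 s ≠ 0 := fun h => hsP1 (Ideal.Quotient.eq_zero_iff_mem.1 h)
  obtain ⟨W, _, _, _, φ, hφ, t, v, a, ht, ht0, hv⟩ := ZN.exists_dvr (Ideal.Quotient.mk P1 s) hs0
    (by
      rw [mem_maximalIdeal, mem_nonunits_iff, isUnit_map_iff]
      exact hu)
    (by
      intro q hq hq0
      by_contra hsq
      refine hmaxi (q.comap (Ideal.Quotient.mk P1)) ⟨inferInstance, ?_, hsq⟩ ?_
      · refine hPP1.trans ?_
        intro r hr
        rw [Ideal.mem_comap, Ideal.Quotient.eq_zero_iff_mem.2 hr]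
        exact zero_mem _
      · refine lt_of_le_of_ne ?_ ?_
        · intro r hr
          rw [Ideal.mem_comap, Ideal.Quotient.eq_zero_iff_mem.2 hr]
          exact zero_mem _
        · intro he
          apply hq0
          rw [eq_bot_iff]
          intro y hy
          obtain ⟨y, rfl⟩ := Ideal.Quotient.mk_surjective y
          have : y ∈ P1 := by rw [he]; exact hy
          exact Ideal.Quotient.eq_zero_iff_mem.2 this)
  refine ZN.core x hx hd (φ.comp (Ideal.Quotient.mk P1)) (RingHom.isLocalHom_comp _ _) t v a ht ht0
    s hv n f ?_
  refine Ideal.pow_right_mono (hPP1.trans ?_) n hf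
  intro r hr
  rw [RingHom.mem_ker, RingHom.comp_apply, Ideal.Quotient.eq_zero_iff_mem.2 hr, map_zero]

/-- **Zariski–Nagata** (general version): if `(R, 𝔪)` is a regular local ring and `𝔭 ⊆ 𝔪`
is a prime ideal, then `𝔭^{(n)} ⊆ 𝔪^n` for every positive integer `n`. -/
theorem symbolicPower_le_pow_maximalIdeal {R : Type*} [CommRing R] [IsLocalRing R]
    (hreg : IsRegularLocal R) (P : Ideal R) [P.IsPrime] (n : ℕ) (hn : 0 < n) :
    symbolicPower P n ≤ IsLocalRing.maximalIdeal R ^ n := by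
  obtain ⟨hnoeth, s₀, hs₀, hcard⟩ := hreg
  intro f hf
  rw [symbolicPower, Ideal.mem_comap,
    IsLocalization.algebraMap_mem_map_algebraMap_iff P.primeCompl] at hf
  obtain ⟨s, hs, hsf⟩ := hf
  refine ZN.main (fun i : s₀ => (i : R)) (by simpa using hs₀) ?_ P s hs n f hsf
  rw [← IsLocalRing.maximalIdeal_height_eq_ringKrullDim] at hcard
  have h2 : (s₀.card : ℕ∞) = (IsLocalRing.maximalIdeal R).height := WithBot.coe_injective hcard
  rw [Nat.card_eq_fintype_card, Fintype.card_coe, h2]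
end

section
/- Let K be a field and let R be a finitely generated K-algebra that is regular (i.e., the localization R_𝔮 is a regular local ring for every prime ideal 𝔮 of R). Then for every prime ideal 𝔭 of R and every positive integer n, the n-th symbolic power of 𝔭 equals the intersection of the n-th powers of all maximal ideals containing 𝔭: 𝔭^{(n)} = ⋂_{𝔪 maximal, 𝔭 ⊆ 𝔪} 𝔪^n. -/
namespace ZarMain
section Part1
open KaehlerDifferential TensorProduct


lemma one_tmul_D_eq_zero_iff {k σ B : Type*} [CommRing k] [CommRing B]
    [Algebra (MvPolynomial σ k) B] (x : MvPolynomial σ k) :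
    ((1 : B) ⊗ₜ[MvPolynomial σ k] (D k (MvPolynomial σ k) x) = 0) ↔
      ∀ i, algebraMap _ B (MvPolynomial.pderiv i x) = 0 := by
  rw [← ((mvPolynomialBasis k σ).baseChange B).repr.map_eq_zero_iff, Finsupp.ext_iff]
  refine forall_congr' fun i => ?_
  rw [Module.Basis.baseChange_repr_tmul, mvPolynomialBasis_repr_apply]
  simp [Algebra.smul_def]

/-- Any field extension of a perfect field is formally smooth. -/
theorem formallySmooth_of_perfect (k L : Type*) [Field k] [Field L] [Algebra k L]
    [PerfectField k] : Algebra.FormallySmooth k L := by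
  classical
  rw [Algebra.formallySmooth_iff]
  refine ⟨inferInstance, ?_⟩
  let alg : ∀ F : IntermediateField k L, Algebra (MvPolynomial F k) F :=
    fun F => (MvPolynomial.aeval (R := k) (fun a : F => a)).toAlgebra
  let algL : Algebra (MvPolynomial L k) L := (MvPolynomial.aeval (R := k) (fun a : L => a)).toAlgebra
  have tL : IsScalarTower k (MvPolynomial L k) L :=
    .of_algebraMap_eq' (AlgHom.comp_algebraMap (MvPolynomial.aeval (R := k) (fun a : L => a))).symm
  have tF : ∀ F : IntermediateField k L, IsScalarTower k (MvPolynomial F k) F :=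
    fun F => .of_algebraMap_eq'
      (AlgHom.comp_algebraMap (MvPolynomial.aeval (R := k) (fun a : F => a))).symm
  have hL (x : MvPolynomial L k) : algebraMap _ L x = MvPolynomial.aeval (fun a : L => a) x := rfl
  have hF (F : IntermediateField k L) (x : MvPolynomial F k) :
    algebraMap _ F x = MvPolynomial.aeval (fun a : F => a) x := rfl
  have surjL : Function.Surjective (algebraMap (MvPolynomial L k) L) := fun a =>
    ⟨MvPolynomial.X a, by rw [hL]; simp⟩
  have surjF (F : IntermediateField k L) : Function.Surjective (algebraMap (MvPolynomial F k) F) := fun a =>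
    ⟨MvPolynomial.X a, by rw [hF]; simp⟩
  rw [← Algebra.FormallySmooth.kerCotangentToTensor_injective_iff surjL, injective_iff_map_eq_zero]
  intro x hx
  obtain ⟨x, rfl⟩ := Ideal.toCotangent_surjective _ x
  obtain ⟨x, hxk⟩ := x
  rw [kerCotangentToTensor_toCotangent, one_tmul_D_eq_zero_iff] at hx
  rw [Ideal.toCotangent_eq_zero]
  simp only at hx ⊢
  let F : IntermediateField k L := IntermediateField.adjoin k (x.vars : Set L)
  obtain ⟨y, hy⟩ := MvPolynomial.exists_rename_eq_of_vars_subset_range x (Subtype.val : F → L)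
    Subtype.val_injective (by
      rw [Subtype.range_coe]; exact IntermediateField.subset_adjoin k _)
  have key (z : MvPolynomial F k) : algebraMap _ L (MvPolynomial.rename (Subtype.val : F → L) z) =
      ((algebraMap _ F z : F) : L) := by
    rw [hL, hF, MvPolynomial.aeval_rename]
    induction z using MvPolynomial.induction_on with
    | C a => simp
    | add p q hp hq => simp only [map_add, hp, hq]; rfl
    | mul_X p i hp => simp only [map_mul, hp]; simp
  have hyk : y ∈ RingHom.ker (algebraMap (MvPolynomial F k) F) := by
    rw [RingHom.mem_ker] at hxk ⊢
    rw [← hy, key] at hxk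
    exact_mod_cast hxk
  have : Algebra.EssFiniteType k F := IntermediateField.essFiniteType_iff.mpr
    ⟨x.vars, rfl⟩
  have inj := (Algebra.FormallySmooth.kerCotangentToTensor_injective_iff (R := k) (surjF F)).mpr inferInstance
  have := (injective_iff_map_eq_zero _).mp inj (Ideal.toCotangent _ ⟨y, hyk⟩) (by
    rw [kerCotangentToTensor_toCotangent, one_tmul_D_eq_zero_iff]
    intro i
    have := hx i
    rw [← hy, MvPolynomial.pderiv_rename Subtype.val_injective, key] at this
    exact_mod_cast this)
  rw [Ideal.toCotangent_eq_zero] at this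
  have h2 := Ideal.mem_map_of_mem (MvPolynomial.rename (R := k) (Subtype.val : F → L)) this
  rw [Ideal.map_pow] at h2
  rw [← hy]
  refine Ideal.pow_right_mono ?_ 2 h2
  rw [Ideal.map_le_iff_le_comap]
  intro z hz
  rw [Ideal.mem_comap, RingHom.mem_ker, key]
  rw [RingHom.mem_ker] at hz
  rw [hz]; rfl

end Part1
section Part2
open IsLocalRing


lemma exists_finset_gen (T : Type*) [CommRing T] [IsRegularLocalRing T] :
    ∃ s : Finset T, Ideal.span (s : Set T) = maximalIdeal T ∧
      s.card = (maximalIdeal T).spanFinrank := by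
  have fg' := (maximalIdeal T).fg_of_isNoetherianRing
  have fg := Submodule.FG.finite_generators fg'
  refine ⟨fg.toFinset, ?_, ?_⟩
  · simpa using (maximalIdeal T).span_generators
  · rw [← Submodule.FG.generators_ncard fg', Set.ncard_eq_toFinset_card _ fg]

lemma spanFinrank_le_of_span {T : Type*} [CommRing T] (I : Ideal T) (s : Finset T)
    (h : Ideal.span (s : Set T) = I) : I.spanFinrank ≤ s.card := by
  rw [← h, ← Set.ncard_coe_finset]
  exact Submodule.spanFinrank_span_le_ncard_of_finite s.finite_toSet

lemma exists_finset_insert (T : Type*) [CommRing T] [IsRegularLocalRing T] (x : T)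
    (hx : x ∈ maximalIdeal T) (hx2 : x ∉ maximalIdeal T ^ 2) :
    ∃ s : Finset T, Ideal.span {x} ⊔ Ideal.span (s : Set T) = maximalIdeal T ∧
      s.card + 1 = (maximalIdeal T).spanFinrank := by
  classical
  obtain ⟨s, hs, hc⟩ := exists_finset_gen T
  rw [← hs] at hx
  obtain ⟨c, hc'⟩ := (Submodule.mem_span_finset' (R := T)).mp hx
  have : ∃ i, c i ∉ maximalIdeal T := by
    by_contra! H
    apply hx2
    rw [← hc', pow_two]
    refine Ideal.sum_mem _ fun i _ => Ideal.mul_mem_mul (H i) ?_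
    rw [← hs]; exact Ideal.subset_span i.2
  obtain ⟨i, hi⟩ := this
  have hu : IsUnit (c i) := by simpa using hi
  refine ⟨s.erase i, ?_, ?_⟩
  · apply le_antisymm
    · rw [sup_le_iff, ← hs]
      refine ⟨by simpa [Ideal.span_le] using hx, Ideal.span_mono (by simp)⟩
    · rw [← hs, Ideal.span_le]
      intro y hy
      by_cases h : y = i
      · subst h
        have h1 : c i * (i : T) = x - ∑ j ∈ Finset.univ.erase i, c j * (j : T) := by
          rw [← hc', ← Finset.add_sum_erase _ _ (Finset.mem_univ i)]; simp
        have h2 : c i * (i : T) ∈ Ideal.span {x} ⊔ Ideal.span ((s.erase i : Finset T) : Set T) := by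
          rw [h1]
          refine Ideal.sub_mem _ (Ideal.mem_sup_left (Ideal.mem_span_singleton_self x))
            (Ideal.mem_sup_right (Ideal.sum_mem _ fun j hj => Ideal.mul_mem_left _ _
              (Ideal.subset_span ?_)))
          have := Finset.ne_of_mem_erase hj
          simp [Subtype.coe_inj, this]
        exact (Ideal.unit_mul_mem_iff_mem _ hu).mp h2
      · exact Ideal.mem_sup_right (Ideal.subset_span (by simp [h]; exact hy))
  · rw [← hc]; exact Finset.card_erase_add_one i.2

lemma isLocal_quot {T : Type*} [CommRing T] [IsLocalRing T] {J : Ideal T} (h : J ≤ maximalIdeal T) :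
    IsLocalRing (T ⧸ J) := by
  have : Nontrivial (T ⧸ J) := Ideal.Quotient.nontrivial_iff.mpr
    (fun e => (maximalIdeal.isMaximal T).ne_top (top_le_iff.mp (e ▸ h)))
  exact IsLocalRing.of_surjective' _ Ideal.Quotient.mk_surjective

lemma maximalIdeal_quot {T : Type*} [CommRing T] [IsLocalRing T] {J : Ideal T}
    [IsLocalRing (T ⧸ J)] :
    maximalIdeal (T ⧸ J) = (maximalIdeal T).map (Ideal.Quotient.mk J) := by
  have h2 : IsLocalHom (Ideal.Quotient.mk J) := .of_surjective _ Ideal.Quotient.mk_surjective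
  have := (IsLocalRing.local_hom_TFAE (Ideal.Quotient.mk J)).out 0 4
  rw [← this.mp h2, Ideal.map_comap_of_surjective _ Ideal.Quotient.mk_surjective]

lemma regular_quot (T : Type*) [CommRing T] [IsRegularLocalRing T] (x : T)
    (hx : x ∈ maximalIdeal T) (hx2 : x ∉ maximalIdeal T ^ 2) :
    ∃ _ : IsRegularLocalRing (T ⧸ Ideal.span {x}),
      (maximalIdeal (T ⧸ Ideal.span {x})).spanFinrank + 1 = (maximalIdeal T).spanFinrank := by
  classical
  obtain ⟨s, hs, hc⟩ := exists_finset_insert T x hx hx2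
  have hle : Ideal.span {x} ≤ maximalIdeal T := by simpa [Ideal.span_le] using hx
  have := isLocal_quot hle
  have h1 : (maximalIdeal (T ⧸ Ideal.span {x})).spanFinrank ≤ s.card := by
    refine (spanFinrank_le_of_span _ (s.image (Ideal.Quotient.mk (Ideal.span {x}))) ?_).trans
      Finset.card_image_le
    rw [maximalIdeal_quot, ← hs, Ideal.map_sup, Ideal.map_quotient_self, Finset.coe_image,
      ← Ideal.map_span]
    simp
  have hT := IsRegularLocalRing.spanFinrank_maximalIdeal (R := T)
  have h2 := ringKrullDim_le_ringKrullDim_quotient_add_card (R := T) {x} (by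
    simpa [IsLocalRing.ringJacobson_eq_maximalIdeal] using hx)
  simp only [Finset.coe_singleton, Finset.card_singleton, Nat.cast_one] at h2
  rw [← hT, ← hc] at h2
  have h3 : ((s.card : ℕ) : WithBot ℕ∞) ≤ ringKrullDim (T ⧸ Ideal.span {x}) := by
    have : ((s.card + 1 : ℕ) : WithBot ℕ∞) = s.card + 1 := by push_cast; rfl
    rw [this] at h2
    have h2' : (s.card : WithBot ℕ∞) + 1 ≤ ringKrullDim (T ⧸ Ideal.span {x}) + 1 := by
      convert h2 using 4
      all_goals simp
    exact (ENat.WithBot.add_le_add_one_right_iff).mp h2'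
  have hreg : IsRegularLocalRing (T ⧸ Ideal.span {x}) :=
    .of_spanFinrank_maximalIdeal_le _ (le_trans (by exact_mod_cast h1) h3)
  refine ⟨hreg, ?_⟩
  rw [← hreg.spanFinrank_maximalIdeal] at h3
  have : s.card ≤ (maximalIdeal (T ⧸ Ideal.span {x})).spanFinrank := by exact_mod_cast h3
  omega


theorem regular_isDomain (d : ℕ) : ∀ (T : Type*) [CommRing T] [IsRegularLocalRing T],
    (maximalIdeal T).spanFinrank = d → IsDomain T := by
  classical
  induction d with
  | zero =>
    intro T _ _ h
    obtain ⟨s, hs, hc⟩ := exists_finset_gen T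
    rw [h, Finset.card_eq_zero] at hc
    subst hc
    have : IsField T := by
      rw [IsLocalRing.isField_iff_maximalIdeal_eq, ← hs]; simp
    exact this.isDomain
  | succ d ih =>
    intro T _ _ h
    set m := maximalIdeal T with hm
    have hT := IsRegularLocalRing.spanFinrank_maximalIdeal (R := T)
    have hfin := minimalPrimes.finite_of_isNoetherianRing T
    have hx : ∃ x ∈ m, x ∉ m ^ 2 ∧ ∀ q ∈ minimalPrimes T, x ∉ q := by
      by_contra! H
      let S : Finset (Ideal T) := insert (m ^ 2) hfin.toFinset
      have hsub : (m : Set T) ⊆ ⋃ i ∈ (S : Set (Ideal T)), ((i : Ideal T) : Set T) := by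
        intro x hx
        by_cases h2 : x ∈ m ^ 2
        · exact Set.mem_biUnion (by simp [S]) h2
        · obtain ⟨q, hq, hxq⟩ := H x hx h2
          exact Set.mem_biUnion (by simp [S, hq]) hxq
      have := (Ideal.subset_union_prime (s := S) (f := fun i => i) (m ^ 2) (m ^ 2) (by
        intro i hi h1 _
        have : i ∈ minimalPrimes T := by simpa [S, h1] using hi
        exact this.1.1)).mp hsub
      obtain ⟨q, hq, hmq⟩ := this
      by_cases hq2 : q = m ^ 2
      · subst hq2
        have : m = ⊥ := by
          refine Submodule.eq_bot_of_le_smul_of_le_jacobson_bot m m (IsNoetherian.noetherian m) ?_ ?_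
          · rwa [pow_two] at hmq
          · exact IsLocalRing.maximalIdeal_le_jacobson _
        rw [this] at h
        simp at h
      · have hq' : q ∈ minimalPrimes T := by simpa [S, hq2] using hq
        have hqp : q.IsPrime := hq'.1.1
        have hqm : q = m := le_antisymm (IsLocalRing.le_maximalIdeal hqp.ne_top) hmq
        have h0 : m.height = 0 := by
          rw [← hqm, Ideal.height_eq_zero_iff]
          exact hq'
        have h1 := IsLocalRing.maximalIdeal_height_eq_ringKrullDim (R := T)
        rw [← hT, ← hm, h0, h] at h1
        have : ((0 : ℕ) : WithBot ℕ∞) = ((d + 1 : ℕ) : WithBot ℕ∞) := by simpa using h1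
        have := Nat.cast_injective this
        omega
    obtain ⟨x, hxm, hx2, hxq⟩ := hx
    obtain ⟨hreg, hr⟩ := regular_quot T x hxm hx2
    have hdom := ih (T ⧸ Ideal.span {x}) (by rw [← hm] at hr; omega)
    have hprime : (Ideal.span {x}).IsPrime := (Ideal.Quotient.isDomain_iff_prime _).mp hdom
    obtain ⟨q, hq, hqx⟩ := Ideal.exists_minimalPrimes_le (I := (⊥ : Ideal T)) (J := Ideal.span {x}) bot_le
    have hqp : q.IsPrime := hq.1.1
    have : q = ⊥ := by
      refine Submodule.eq_bot_of_le_smul_of_le_jacobson_bot (Ideal.span {x}) q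
        (IsNoetherian.noetherian q) ?_ ?_
      · intro y hy
        obtain ⟨z, rfl⟩ := Ideal.mem_span_singleton.mp (hqx hy)
        exact Ideal.mul_mem_mul (Ideal.mem_span_singleton_self x)
          ((hqp.mem_or_mem hy).resolve_left (hxq q hq))
      · refine le_trans ?_ (IsLocalRing.maximalIdeal_le_jacobson _)
        exact (Ideal.span_singleton_le_iff_mem _).mpr hxm
    rw [this] at hqp
    have := (Ideal.Quotient.isDomain_iff_prime (⊥ : Ideal T)).mpr hqp
    exact (RingEquiv.quotientBot T).symm.toMulEquiv.isDomain _

lemma eq_bot_of_le_sq {T : Type*} [CommRing T] [IsRegularLocalRing T] (J : Ideal T)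
    (hJ : J ≤ maximalIdeal T ^ 2) [IsRegularLocalRing (T ⧸ J)] : J = ⊥ := by
  classical
  by_contra hne
  have hdom := regular_isDomain _ T rfl
  obtain ⟨s, hs, hc⟩ := exists_finset_gen (T ⧸ J)
  obtain ⟨x, hxJ, hx0⟩ := Submodule.exists_mem_ne_zero_of_ne_bot hne
  have hsurj := Ideal.Quotient.mk_surjective (I := J)
  let s' : Finset T := s.image (Function.surjInv hsurj)
  have hs'im : (Ideal.Quotient.mk J) '' (s' : Set T) = s := by
    ext a
    simp [s', Function.surjInv_eq hsurj]
  have hmap : (Ideal.span (s' : Set T)).map (Ideal.Quotient.mk J) = maximalIdeal (T ⧸ J) := by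
    rw [Ideal.map_span, hs'im, hs]
  have hle : maximalIdeal T ≤ Ideal.span (s' : Set T) ⊔ maximalIdeal T * maximalIdeal T := by
    intro a ha
    have : Ideal.Quotient.mk J a ∈ (Ideal.span (s' : Set T)).map (Ideal.Quotient.mk J) := by
      rw [hmap, maximalIdeal_quot]; exact Ideal.mem_map_of_mem _ ha
    rw [Ideal.mem_quotient_iff_mem_sup] at this
    rw [← pow_two]
    exact (sup_le_sup_left hJ _) this
  have hle2 : maximalIdeal T ≤ Ideal.span (s' : Set T) :=
    Submodule.le_of_le_smul_of_le_jacobson_bot (IsNoetherian.noetherian _)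
      (IsLocalRing.maximalIdeal_le_jacobson _) hle
  have heq : Ideal.span (s' : Set T) = maximalIdeal T := by
    refine le_antisymm (IsLocalRing.le_maximalIdeal fun h => ?_) hle2
    rw [h, Ideal.map_top] at hmap
    exact (maximalIdeal.isMaximal (T ⧸ J)).ne_top hmap.symm
  have h1 := (spanFinrank_le_of_span _ s' heq).trans Finset.card_image_le
  rw [hc] at h1
  have h2 : ringKrullDim T ≤ ringKrullDim (T ⧸ J) := by
    rw [← IsRegularLocalRing.spanFinrank_maximalIdeal, ← IsRegularLocalRing.spanFinrank_maximalIdeal]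
    exact_mod_cast h1
  have h3 := ringKrullDim_quotient_succ_le_of_nonZeroDivisor (mem_nonZeroDivisors_of_ne_zero hx0)
  have hle3 : Ideal.span {x} ≤ J := by simpa [Ideal.span_le] using hxJ
  have h4 : ringKrullDim (T ⧸ J) ≤ ringKrullDim (T ⧸ Ideal.span {x}) :=
    ringKrullDim_le_of_surjective (Ideal.Quotient.factor hle3) (Ideal.Quotient.factor_surjective hle3)
  have h5 : ringKrullDim T + 1 ≤ ringKrullDim T := le_trans (add_le_add_left (h2.trans h4) 1) h3
  rw [← IsRegularLocalRing.spanFinrank_maximalIdeal (R := T)] at h5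
  have : (((maximalIdeal T).spanFinrank + 1 : ℕ) : WithBot ℕ∞) ≤ ((maximalIdeal T).spanFinrank : ℕ) := by
    push_cast; exact h5
  have : (maximalIdeal T).spanFinrank + 1 ≤ (maximalIdeal T).spanFinrank := by exact_mod_cast this
  omega

theorem exists_gens (d : ℕ) : ∀ (T : Type*) [CommRing T] [IsRegularLocalRing T] (J : Ideal T)
    [IsRegularLocalRing (T ⧸ J)], (maximalIdeal T).spanFinrank = d →
    ∃ (c : ℕ) (y : Fin c → T), Ideal.span (Set.range y) = J ∧
      ∀ a : Fin c → T, ∑ i, a i * y i ∈ maximalIdeal T ^ 2 → ∀ i, a i ∈ maximalIdeal T := by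
  induction d with
  | zero =>
    intro T _ _ J _ hd
    have hJ : J ≤ maximalIdeal T := IsLocalRing.le_maximalIdeal
      (Ideal.Quotient.nontrivial_iff.mp inferInstance)
    have := (Submodule.spanFinrank_eq_zero_iff_eq_bot (IsNoetherian.noetherian _)).mp hd
    rw [this, le_bot_iff] at hJ
    exact ⟨0, Fin.elim0, by simp [hJ], fun a _ i => i.elim0⟩
  | succ d ih =>
    intro T _ _ J _ hd
    have hJ : J ≤ maximalIdeal T := IsLocalRing.le_maximalIdeal
      (Ideal.Quotient.nontrivial_iff.mp inferInstance)
    by_cases hJ2 : J ≤ maximalIdeal T ^ 2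
    · exact ⟨0, Fin.elim0, by simp [eq_bot_of_le_sq J hJ2], fun a _ i => i.elim0⟩
    obtain ⟨x, hxJ, hx2⟩ := SetLike.not_le_iff_exists.mp hJ2
    obtain ⟨hreg, hr⟩ := regular_quot T x (hJ hxJ) hx2
    have hle : Ideal.span {x} ≤ J := by simpa [Ideal.span_le] using hxJ
    have : IsRegularLocalRing ((T ⧸ Ideal.span {x}) ⧸ J.map (Ideal.Quotient.mk (Ideal.span {x}))) :=
      .of_ringEquiv (DoubleQuot.quotQuotEquivQuotOfLE hle).symm
    obtain ⟨c, y, hy, hind⟩ := ih (T ⧸ Ideal.span {x}) (J.map (Ideal.Quotient.mk (Ideal.span {x})))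
      (by omega)
    choose y' hy' using fun i => Ideal.Quotient.mk_surjective (y i)
    refine ⟨c + 1, Fin.cons x y', ?_, ?_⟩
    · rw [Fin.range_cons, Set.insert_eq, Ideal.span_union]
      have h1 : (Ideal.span (Set.range y')).map (Ideal.Quotient.mk (Ideal.span {x})) =
          J.map (Ideal.Quotient.mk (Ideal.span {x})) := by
        rw [Ideal.map_span, ← hy, ← Set.range_comp]
        congr 2
        ext i; simp [hy']
      have h2 := congrArg (Ideal.comap (Ideal.Quotient.mk (Ideal.span {x}))) h1
      rw [Ideal.comap_map_of_surjective _ Ideal.Quotient.mk_surjective,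
        Ideal.comap_map_of_surjective _ Ideal.Quotient.mk_surjective, ← RingHom.ker_eq_comap_bot,
        Ideal.mk_ker, sup_eq_left.mpr hle] at h2
      rw [sup_comm, h2]
    · intro a ha
      rw [Fin.sum_univ_succ] at ha
      simp only [Fin.cons_zero, Fin.cons_succ] at ha
      have h1 : ∑ i, Ideal.Quotient.mk (Ideal.span {x}) (a i.succ) * y i ∈
          maximalIdeal (T ⧸ Ideal.span {x}) ^ 2 := by
        have := Ideal.mem_map_of_mem (Ideal.Quotient.mk (Ideal.span {x})) ha
        rw [Ideal.map_pow, ← maximalIdeal_quot, map_add, map_mul, map_sum] at this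
        have hx0 : Ideal.Quotient.mk (Ideal.span {x}) x = 0 :=
          Ideal.Quotient.eq_zero_iff_mem.mpr (Ideal.mem_span_singleton_self x)
        simpa [hx0, hy'] using this
      have h2 := hind _ h1
      have h3 : ∀ i : Fin c, a i.succ ∈ maximalIdeal T := fun i => by
        have h4 := h2 i
        by_contra h5
        rw [IsLocalRing.mem_maximalIdeal, mem_nonunits_iff, not_not] at h5
        exact (IsLocalRing.mem_maximalIdeal _).mp h4 (h5.map (Ideal.Quotient.mk (Ideal.span {x})))
      have hy'm : ∀ i, y' i ∈ maximalIdeal T := fun i => by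
        have h4 : y i ∈ J.map (Ideal.Quotient.mk (Ideal.span {x})) := by
          rw [← hy]; exact Ideal.subset_span ⟨i, rfl⟩
        rw [← hy' i, Ideal.mem_quotient_iff_mem hle] at h4
        exact hJ h4
      have h4 : a 0 * x ∈ maximalIdeal T ^ 2 := by
        refine (Ideal.add_mem_iff_left _ (Ideal.sum_mem _ fun i _ => ?_)).mp ha
        rw [pow_two]
        exact Ideal.mul_mem_mul (h3 i) (hy'm i)
      intro i
      refine Fin.cases ?_ h3 i
      by_contra h5
      rw [IsLocalRing.mem_maximalIdeal, mem_nonunits_iff, not_not] at h5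
      exact hx2 ((Ideal.unit_mul_mem_iff_mem _ h5).mp h4)

section LemmaC
open KaehlerDifferential TensorProduct IsLocalRing

theorem exists_derivations (k : Type*) {R : Type*} [Field k] [PerfectField k] [CommRing R]
    [Algebra k R] [Algebra.FormallySmooth k R] (P : Ideal R) [P.IsPrime] {c : ℕ} (z : Fin c → R)
    (hz : ∀ i, z i ∈ P)
    (hind : ∀ a : Fin c → Localization.AtPrime P,
      ∑ i, a i * algebraMap R (Localization.AtPrime P) (z i) ∈
        maximalIdeal (Localization.AtPrime P) ^ 2 →
      ∀ i, a i ∈ maximalIdeal (Localization.AtPrime P)) :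
    ∃ d : Fin c → Derivation k R P.ResidueField, ∀ i j, d j (z i) = if i = j then 1 else 0 := by
  classical
  set A := Localization.AtPrime P with hA
  let L := ResidueField A
  have : Algebra.FormallySmooth k L := formallySmooth_of_perfect k L
  have : Algebra.FormallySmooth k A := inferInstance
  have hsurj : Function.Surjective (algebraMap A L) := IsLocalRing.residue_surjective
  obtain ⟨l, hl⟩ := (Algebra.FormallySmooth.iff_split_injection (R := k) hsurj).mp
    (inferInstance : Algebra.FormallySmooth k L)
  have hker : RingHom.ker (algebraMap A L) = maximalIdeal A := IsLocalRing.ker_residue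
  let lam : Ω[A⁄k] →ₗ[A] CotangentSpace A :=
    (Ideal.Cotangent.equivOfEq _ _ hker).toLinearMap ∘ₗ l ∘ₗ (TensorProduct.mk A L Ω[A⁄k] 1)
  have hlam (x : A) (hx : x ∈ maximalIdeal A) :
      lam (D k A x) = (maximalIdeal A).toCotangent ⟨x, hx⟩ := by
    have h1 := LinearMap.congr_fun hl ((RingHom.ker (algebraMap A L)).toCotangent ⟨x, hker ▸ hx⟩)
    rw [LinearMap.comp_apply, kerCotangentToTensor_toCotangent] at h1
    simp only [lam, LinearMap.comp_apply, TensorProduct.mk_apply, LinearEquiv.coe_coe]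
    simp only at h1
    rw [h1]
    simp
    rfl
  have hzm (i) : algebraMap R A (z i) ∈ maximalIdeal A :=
    (IsLocalization.AtPrime.to_map_mem_maximal_iff A P (z i)).mpr (hz i)
  let v : Fin c → CotangentSpace A := fun i => (maximalIdeal A).toCotangent ⟨_, hzm i⟩
  have hv : LinearIndependent L v := by
    rw [Fintype.linearIndependent_iff]
    intro g hg
    choose a ha using fun i => hsurj (g i)
    have h1 : ∑ i, a i * algebraMap R A (z i) ∈ maximalIdeal A ^ 2 := by
      have h2 : (maximalIdeal A).toCotangent (∑ i, a i • ⟨_, hzm i⟩) = 0 := by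
        rw [map_sum, ← hg]
        refine Finset.sum_congr rfl fun i _ => ?_
        rw [← ha, map_smul, algebraMap_smul]
      rw [Ideal.toCotangent_eq_zero] at h2
      simpa using h2
    intro i
    rw [← ha]
    exact (IsLocalRing.residue_eq_zero_iff _).mpr (hind a h1 i)
  have hex : ∀ j, ∃ f : CotangentSpace A →ₗ[L] L, ∀ i, f (v i) = if i = j then 1 else 0 := by
    intro j
    let e := Module.Basis.span hv
    obtain ⟨f, hf⟩ := LinearMap.exists_extend (e.coord j)
    refine ⟨f, fun i => ?_⟩
    have h1 := LinearMap.congr_fun hf (e i)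
    rw [Module.Basis.coord_apply, Module.Basis.repr_self, Finsupp.single_apply] at h1
    rw [← h1, LinearMap.comp_apply, Submodule.subtype_apply, Module.Basis.span_apply]
  choose f hf using hex
  refine ⟨fun j => (((f j).restrictScalars A ∘ₗ lam).compDer (D k A)).compAlgebraMap R, ?_⟩
  intro i j
  rw [← hf j i]
  show f j (lam (D k A (algebraMap R A (z i)))) = _
  rw [hlam _ (hzm i)]

end LemmaC
section GoalA
open KaehlerDifferential TensorProduct IsLocalRing

lemma exists_common_mul {S : Type*} [CommRing S] [IsNoetherianRing S] (M : Ideal S) [M.IsPrime]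
    (I J : Ideal S) (h : ∀ x ∈ I, ∃ s ∉ M, s * x ∈ J) : ∃ g ∉ M, ∀ x ∈ I, g * x ∈ J := by
  classical
  obtain ⟨t, ht⟩ := (IsNoetherian.noetherian I)
  have h' : ∀ x ∈ t, ∃ s ∉ M, s * x ∈ J := fun x hx => h x (ht ▸ Submodule.subset_span hx)
  clear h
  have key : ∃ g ∉ M, ∀ x ∈ t, g * x ∈ J := by
    clear ht
    induction t using Finset.induction_on with
    | empty => exact ⟨1, fun h => Ideal.IsPrime.ne_top ‹_› ((Ideal.eq_top_iff_one _).mpr h), by simp⟩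
    | insert a t ha ih =>
      obtain ⟨g, hg, hg'⟩ := ih fun x hx => h' x (Finset.mem_insert_of_mem hx)
      obtain ⟨s, hs, hs'⟩ := h' a (Finset.mem_insert_self _ _)
      refine ⟨g * s, fun h => ((‹M.IsPrime›.mem_or_mem h).elim hg hs), ?_⟩
      intro x hx
      rcases Finset.mem_insert.mp hx with rfl | hx
      · rw [mul_assoc]; exact J.mul_mem_left _ hs'
      · rw [mul_comm g, mul_assoc]; exact J.mul_mem_left _ (hg' x hx)
  obtain ⟨g, hg, hg'⟩ := key
  refine ⟨g, hg, fun x hx => ?_⟩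
  rw [← ht] at hx
  induction hx using Submodule.span_induction with
  | mem x hx => exact hg' x hx
  | zero => simp
  | add x y _ _ h1 h2 => rw [mul_add]; exact J.add_mem h1 h2
  | smul a x _ h1 => rw [smul_eq_mul, mul_left_comm]; exact J.mul_mem_left _ h1

lemma mem_map_atPrime {S : Type*} [CommRing S] (M : Ideal S) [M.IsPrime] (J : Ideal S) (x : S) :
    algebraMap S (Localization.AtPrime M) x ∈ J.map (algebraMap S (Localization.AtPrime M)) ↔
      ∃ s ∉ M, s * x ∈ J := by
  rw [IsLocalization.algebraMap_mem_map_algebraMap_iff M.primeCompl]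
  rfl

lemma regular_local_quot {S R : Type*} [CommRing S] [CommRing R] [Algebra S R]
    (hsurj : Function.Surjective (algebraMap S R)) (M : Ideal S) [hM : M.IsMaximal]
    (hI : RingHom.ker (algebraMap S R) ≤ M)
    (hR : ∀ (m : Ideal R) [m.IsMaximal], IsRegularLocalRing (Localization.AtPrime m)) :
    IsRegularLocalRing (Localization.AtPrime M ⧸
      (RingHom.ker (algebraMap S R)).map (algebraMap S (Localization.AtPrime M))) := by
  have hmne : M.map (algebraMap S R) ≠ ⊤ := by
    intro h
    have := congrArg (Ideal.comap (algebraMap S R)) h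
    rw [Ideal.comap_map_of_surjective' _ hsurj, sup_eq_left.mpr hI, Ideal.comap_top] at this
    exact hM.ne_top this
  have hm : (M.map (algebraMap S R)).IsMaximal :=
    (Ideal.map_eq_top_or_isMaximal_of_surjective _ hsurj hM).resolve_left hmne
  set T := Localization.AtPrime M
  set J := (RingHom.ker (algebraMap S R)).map (algebraMap S T)
  let f : R →+* T ⧸ J := (Ideal.Quotient.lift _ (((Ideal.Quotient.mk J).comp (algebraMap S T)))
    (by intro a ha; exact Ideal.Quotient.eq_zero_iff_mem.mpr (Ideal.mem_map_of_mem _ ha))).comp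
    (RingHom.quotientKerEquivOfSurjective hsurj).symm.toRingHom
  have hf (s : S) : f (algebraMap S R s) = Ideal.Quotient.mk J (algebraMap S T s) := by
    have : (RingHom.quotientKerEquivOfSurjective hsurj).symm (algebraMap S R s) =
      Ideal.Quotient.mk _ s := by rw [RingEquiv.symm_apply_eq]; rfl
    simp only [f, RingHom.comp_apply, RingEquiv.toRingHom_eq_coe, RingHom.coe_coe, this,
      Ideal.Quotient.lift_mk]
  letI := f.toAlgebra
  have hloc := IsLocalization.of_surjective M.primeCompl T (algebraMap S R) hsurj
    (Ideal.Quotient.mk J) Ideal.Quotient.mk_surjective (by ext s; exact (hf s).symm) (by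
      rw [Ideal.mk_ker])
  have hpc : M.primeCompl.map (algebraMap S R) = (M.map (algebraMap S R)).primeCompl := by
    ext r
    constructor
    · rintro ⟨s, hs, rfl⟩ h
      have : s ∈ (M.map (algebraMap S R)).comap (algebraMap S R) := h
      rw [Ideal.comap_map_of_surjective' _ hsurj, sup_eq_left.mpr hI] at this
      exact hs this
    · intro hr
      obtain ⟨s, rfl⟩ := hsurj r
      exact ⟨s, fun h => hr (Ideal.mem_map_of_mem _ h), rfl⟩
  rw [hpc] at hloc
  have := hR (M.map (algebraMap S R))
  exact .of_ringEquiv (IsLocalization.algEquiv (M.map (algebraMap S R)).primeCompl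
    (Localization.AtPrime (M.map (algebraMap S R))) (T ⧸ J)).toRingEquiv

lemma local_retraction (k : Type*) {S R : Type*} [Field k] [PerfectField k] [CommRing S] [CommRing R]
    [Algebra k S] [Algebra S R] [Algebra.FormallySmooth k S] [IsNoetherianRing S]
    (hsurj : Function.Surjective (algebraMap S R)) (M : Ideal S) [hM : M.IsMaximal]
    (hI : RingHom.ker (algebraMap S R) ≤ M)
    (hS : ∀ (m : Ideal S) [m.IsMaximal], IsRegularLocalRing (Localization.AtPrime m))
    (hR : ∀ (m : Ideal R) [m.IsMaximal], IsRegularLocalRing (Localization.AtPrime m)) :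
    ∃ h ∉ M, ∃ l : R ⊗[S] Ω[S⁄k] →ₗ[S] (RingHom.ker (algebraMap S R)).Cotangent,
      l ∘ₗ kerCotangentToTensor k S R = h • LinearMap.id := by
  classical
  have := regular_local_quot hsurj M hI hR
  have := hS M
  set I := RingHom.ker (algebraMap S R) with hIdef
  set T := Localization.AtPrime M with hT
  obtain ⟨c, y, hy, hind⟩ := exists_gens _ T (I.map (algebraMap S T)) rfl
  have h1 : ∀ i, ∃ a ∈ I, ∃ u : T, IsUnit u ∧ algebraMap S T a = u * y i := by
    intro i
    have : y i ∈ I.map (algebraMap S T) := by rw [← hy]; exact Ideal.subset_span ⟨i, rfl⟩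
    rw [IsLocalization.mem_map_algebraMap_iff M.primeCompl] at this
    obtain ⟨⟨a, s⟩, h⟩ := this
    exact ⟨a, a.2, algebraMap S T s, IsLocalization.map_units T s, by rw [← h, mul_comm]⟩
  choose a haI u hu hau using h1
  have hspan : I.map (algebraMap S T) ≤ (Ideal.span (Set.range a)).map (algebraMap S T) := by
    rw [← hy, Ideal.span_le]
    rintro _ ⟨i, rfl⟩
    have : algebraMap S T (a i) ∈ (Ideal.span (Set.range a)).map (algebraMap S T) :=
      Ideal.mem_map_of_mem _ (Ideal.subset_span ⟨i, rfl⟩)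
    rw [hau] at this
    exact (Ideal.unit_mul_mem_iff_mem _ (hu i)).mp this
  obtain ⟨g, hgM, hg⟩ := exists_common_mul M I (Ideal.span (Set.range a)) fun x hx =>
    (mem_map_atPrime M _ x).mp (hspan (Ideal.mem_map_of_mem _ hx))
  obtain ⟨d, hd⟩ := exists_derivations k M a (fun i => hI (haI i)) (by
    intro b hb i
    have h2 := hind (fun i => b i * u i) (by
      convert hb using 2
      rw [hau, mul_assoc]) i
    exact (Ideal.mul_unit_mem_iff_mem _ (hu i)).mp h2)
  have hκ : Function.Surjective (Algebra.linearMap S M.ResidueField) :=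
    Ideal.algebraMap_residueField_surjective M
  choose e he using fun j => Module.projective_lifting_property (Algebra.linearMap S M.ResidueField)
    ((d j).liftKaehlerDifferential) hκ
  have he' (i j) : algebraMap S M.ResidueField (e j (D k S (a i))) = if i = j then 1 else 0 := by
    have := LinearMap.congr_fun (he j) (D k S (a i))
    rw [Derivation.liftKaehlerDifferential_comp_D, hd] at this
    exact this
  let N : Matrix (Fin c) (Fin c) S := fun i j => e j (D k S (a i))
  have hdet : N.det ∉ M := by
    intro h
    have h2 : algebraMap S M.ResidueField N.det = 1 := by
      have h3 : (algebraMap S M.ResidueField).mapMatrix N = 1 := by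
        ext i j
        rw [RingHom.mapMatrix_apply, Matrix.map_apply, Matrix.one_apply]
        exact he' i j
      rw [RingHom.map_det, h3, Matrix.det_one]
    rw [(Ideal.algebraMap_residueField_eq_zero).mpr h] at h2
    exact zero_ne_one h2
  let e' : Fin c → Ω[S⁄k] →ₗ[S] S := fun j => ∑ i, N.adjugate i j • e i
  have he'2 (i j) : e' j (D k S (a i)) = if i = j then N.det else 0 := by
    have := congrFun (congrFun (Matrix.mul_adjugate N) i) j
    rw [Matrix.mul_apply, Matrix.smul_apply, Matrix.one_apply] at this
    simp only [e', LinearMap.sum_apply, LinearMap.smul_apply, smul_eq_mul]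
    simp only [N] at this ⊢
    rw [Finset.sum_congr rfl fun x _ => mul_comm _ _, this]
    simp
  let E : Ω[S⁄k] →ₗ[S] I.Cotangent :=
    ∑ j, (LinearMap.toSpanSingleton S I.Cotangent (I.toCotangent ⟨a j, haI j⟩)) ∘ₗ e' j
  have hE (w) : E w = ∑ j, e' j w • I.toCotangent ⟨a j, haI j⟩ := by
    simp [E]
  have hsurj' : Function.Surjective (Algebra.linearMap S R) := hsurj
  let ρ : R →ₗ[S] (I.Cotangent →ₗ[S] I.Cotangent) :=
    ((LinearMap.ker (Algebra.linearMap S R)).liftQ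
      (LinearMap.toSpanSingleton S (I.Cotangent →ₗ[S] I.Cotangent) LinearMap.id) (by
        intro x hx
        rw [LinearMap.mem_ker, LinearMap.toSpanSingleton_apply]
        ext v
        exact Ideal.Cotangent.smul_eq_zero_of_mem (I := I) hx v)) ∘ₗ
    ((Algebra.linearMap S R).quotKerEquivOfSurjective hsurj').symm.toLinearMap
  have hρ : ρ 1 = LinearMap.id := by
    have h2 : ((Algebra.linearMap S R).quotKerEquivOfSurjective hsurj').symm 1 =
        Submodule.Quotient.mk 1 := by
      rw [LinearEquiv.symm_apply_eq, LinearMap.quotKerEquivOfSurjective_apply_mk]; simp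
    simp only [ρ, LinearMap.comp_apply, LinearEquiv.coe_coe, h2, Submodule.liftQ_apply,
      LinearMap.toSpanSingleton_apply, one_smul]
  let l : R ⊗[S] Ω[S⁄k] →ₗ[S] I.Cotangent := TensorProduct.lift ((LinearMap.lcomp S I.Cotangent E) ∘ₗ ρ)
  have hl (w) : l (1 ⊗ₜ w) = E w := by
    simp [l, hρ]
  have hEspan (x : S) (hx : x ∈ I) (hxs : x ∈ Ideal.span (Set.range a)) :
      E (D k S x) = N.det • I.toCotangent ⟨x, hx⟩ := by
    obtain ⟨b, hb⟩ := Ideal.mem_span_range_iff_exists_fun.mp hxs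
    have h3 : I.toCotangent ⟨x, hx⟩ = ∑ i, b i • I.toCotangent ⟨a i, haI i⟩ := by
      simp only [← map_smul, ← map_sum]
      congr 1
      ext
      simp [hb]
    have h4 : D k S x = ∑ i, (b i • D k S (a i) + a i • D k S (b i)) := by
      rw [← hb, map_sum]
      exact Finset.sum_congr rfl fun i _ => Derivation.leibniz _ _ _
    rw [h4, h3, map_sum, Finset.smul_sum]
    refine Finset.sum_congr rfl fun i _ => ?_
    rw [map_add, map_smul, map_smul, Ideal.Cotangent.smul_eq_zero_of_mem (haI i), add_zero, hE]
    simp [he'2, smul_smul, mul_comm]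
  refine ⟨g * N.det, fun h => (hM.isPrime.mem_or_mem h).elim hgM hdet, g • l, ?_⟩
  ext x
  obtain ⟨⟨x, hx⟩, rfl⟩ := I.toCotangent_surjective x
  rw [LinearMap.comp_apply, LinearMap.smul_apply, kerCotangentToTensor_toCotangent, hl,
    LinearMap.smul_apply, LinearMap.id_apply]
  have h5 := hEspan (g * x) (I.mul_mem_left _ hx) (hg x hx)
  rw [Derivation.leibniz, map_add, map_smul, map_smul,
    Ideal.Cotangent.smul_eq_zero_of_mem hx, add_zero] at h5
  rw [h5, mul_comm g N.det, mul_smul, ← map_smul _ g]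
  rfl

theorem formallySmooth_quot (k : Type*) {S R : Type*} [Field k] [PerfectField k] [CommRing S] [CommRing R]
    [Algebra k S] [Algebra S R] [Algebra k R] [IsScalarTower k S R]
    [Algebra.FormallySmooth k S] [IsNoetherianRing S]
    (hsurj : Function.Surjective (algebraMap S R))
    (hS : ∀ (m : Ideal S) [m.IsMaximal], IsRegularLocalRing (Localization.AtPrime m))
    (hR : ∀ (m : Ideal R) [m.IsMaximal], IsRegularLocalRing (Localization.AtPrime m)) :
    Algebra.FormallySmooth k R := by
  rw [Algebra.FormallySmooth.iff_split_injection (P := S) hsurj]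
  let 𝔞 : Ideal S :=
    { carrier := {h | ∃ l : R ⊗[S] Ω[S⁄k] →ₗ[S] (RingHom.ker (algebraMap S R)).Cotangent,
        l ∘ₗ kerCotangentToTensor k S R = h • LinearMap.id}
      zero_mem' := ⟨0, by simp⟩
      add_mem' := by
        rintro x y ⟨l, hl⟩ ⟨l', hl'⟩
        exact ⟨l + l', by rw [LinearMap.add_comp, hl, hl', add_smul]⟩
      smul_mem' := by
        rintro x y ⟨l, hl⟩
        exact ⟨x • l, by rw [LinearMap.smul_comp, hl, smul_eq_mul, mul_smul]⟩ }
  have htop : 𝔞 = ⊤ := by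
    by_contra hne
    obtain ⟨M, hM, hle⟩ := Ideal.exists_le_maximal _ hne
    have hI : RingHom.ker (algebraMap S R) ≤ M := by
      refine le_trans ?_ hle
      intro x hx
      refine ⟨0, ?_⟩
      ext v
      simp [Ideal.Cotangent.smul_eq_zero_of_mem hx v]
    obtain ⟨h, hh, l, hl⟩ := local_retraction k hsurj M hI hS hR
    exact hh (hle ⟨l, hl⟩)
  have h1 : (1 : S) ∈ 𝔞 := htop ▸ Submodule.mem_top
  obtain ⟨l, hl⟩ := h1
  exact ⟨l, by rw [hl, one_smul]⟩

theorem formallySmooth_of_regular (k K : Type*) {R : Type*} [Field k] [PerfectField k] [Field K]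
    [CommRing R] [Algebra k K] [Algebra K R] [Algebra k R] [IsScalarTower k K R]
    (hfg : Algebra.FiniteType K R)
    (hR : ∀ (m : Ideal R) [m.IsMaximal], IsRegularLocalRing (Localization.AtPrime m)) :
    Algebra.FormallySmooth k R := by
  obtain ⟨N, f, hf⟩ := Algebra.FiniteType.iff_quotient_mvPolynomial''.mp hfg
  letI := f.toRingHom.toAlgebra
  have : IsScalarTower k (MvPolynomial (Fin N) K) R := .of_algebraMap_eq fun x => by
    rw [IsScalarTower.algebraMap_apply k K R,
      IsScalarTower.algebraMap_apply k K (MvPolynomial (Fin N) K)]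
    exact (f.commutes _).symm
  have := formallySmooth_of_perfect k K
  have : Algebra.FormallySmooth k (MvPolynomial (Fin N) K) := .comp k K _
  have hreg : IsRegularRing (MvPolynomial (Fin N) K) := inferInstance
  exact formallySmooth_quot k (S := MvPolynomial (Fin N) K) hf
    (fun m _ => inferInstance) hR

end GoalA
end Part2
section Lifting
open KaehlerDifferential MvPolynomial

theorem exists_jet (k R : Type*) [CommRing k] [CommRing R] [Algebra k R]
    [Algebra.FormallySmooth k R] (n : ℕ) (s : Ω[R⁄k] →ₗ[R] (Ω[R⁄k] →₀ R)) :
    ∃ (φ : R →+* MvPolynomial Ω[R⁄k] R ⧸ idealOfVars Ω[R⁄k] R ^ n)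
      (q : R → MvPolynomial Ω[R⁄k] R), (∀ r, Ideal.Quotient.mk _ (q r) = φ r) ∧
      ∀ r, q r - (C r + Finsupp.linearCombination R (X : _ → MvPolynomial Ω[R⁄k] R) (s (D k R r))) ∈
        idealOfVars Ω[R⁄k] R ^ 2 := by
  classical
  set W := Ω[R⁄k]
  set 𝔛 := idealOfVars W R with h𝔛
  let T : R → MvPolynomial W R := fun r =>
    Finsupp.linearCombination R (X : W → MvPolynomial W R) (s (D k R r))
  have hT𝔛 (r) : T r ∈ 𝔛 := by
    simp only [T]
    rw [Finsupp.linearCombination_apply]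
    refine Ideal.sum_mem _ fun w _ => ?_
    show s (D k R r) w • X w ∈ 𝔛
    rw [MvPolynomial.smul_eq_C_mul]
    exact Ideal.mul_mem_left _ _ (Ideal.subset_span ⟨w, rfl⟩)
  have hTadd (x y) : T (x + y) = T x + T y := by simp [T]
  have hTmul (x y) : T (x * y) = C x * T y + C y * T x := by
    simp only [T, Derivation.leibniz, map_add, map_smul, smul_eq_C_mul]
  let f : R →ₐ[k] MvPolynomial W R ⧸ 𝔛 ^ 2 :=
    AlgHom.ofLinearMap
      { toFun := fun r => Ideal.Quotient.mk _ (C r + T r)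
        map_add' := fun x y => by
          rw [← map_add]; congr 1; rw [hTadd, C_add]; ring
        map_smul' := fun a x => by
          have h1 : T (a • x) = a • T x := by
            simp only [T]
            rw [Derivation.map_smul, ← algebraMap_smul R a (D k R x), map_smul, map_smul,
              algebraMap_smul]
          rw [h1, RingHom.id_apply, Algebra.smul_def a (Ideal.Quotient.mk (𝔛 ^ 2) _),
            Algebra.smul_def a (T x), Algebra.smul_def a x]
          rw [IsScalarTower.algebraMap_apply k (MvPolynomial W R) (MvPolynomial W R ⧸ 𝔛 ^ 2),
            Ideal.Quotient.algebraMap_eq, ← map_mul]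
          congr 1
          rw [C_mul, mul_add]
          rfl }
      (by simp [T])
      (by
        intro x y
        show Ideal.Quotient.mk _ _ = Ideal.Quotient.mk _ _ * Ideal.Quotient.mk _ _
        rw [← map_mul, Ideal.Quotient.eq]
        have : C (x * y) + T (x * y) - (C x + T x) * (C y + T y) = -(T x * T y) := by
          rw [hTmul, C_mul]; ring
        rw [this, pow_two]
        exact neg_mem (Ideal.mul_mem_mul (hT𝔛 x) (hT𝔛 y)))
  have hle : 𝔛 ^ (n + 2) ≤ 𝔛 ^ 2 := Ideal.pow_le_pow_right (by omega)
  have hlen : 𝔛 ^ (n + 2) ≤ 𝔛 ^ n := Ideal.pow_le_pow_right (by omega)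
  let g : (MvPolynomial W R ⧸ 𝔛 ^ (n + 2)) →ₐ[k] (MvPolynomial W R ⧸ 𝔛 ^ 2) :=
    Ideal.Quotient.factorₐ k hle
  have hg : Function.Surjective g := Ideal.Quotient.factor_surjective hle
  have hgn : IsNilpotent (RingHom.ker (g : (MvPolynomial W R ⧸ 𝔛 ^ (n + 2)) →+* (MvPolynomial W R ⧸ 𝔛 ^ 2))) := by
    refine ⟨n + 2, ?_⟩
    have h1 : RingHom.ker (g : (MvPolynomial W R ⧸ 𝔛 ^ (n + 2)) →+* (MvPolynomial W R ⧸ 𝔛 ^ 2)) ≤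
        𝔛.map (Ideal.Quotient.mk _) := by
      intro a ha
      obtain ⟨a, rfl⟩ := Ideal.Quotient.mk_surjective a
      have h2 : Ideal.Quotient.mk (𝔛 ^ 2) a = 0 := ha
      rw [Ideal.Quotient.eq_zero_iff_mem] at h2
      exact Ideal.mem_map_of_mem _ (Ideal.pow_le_self two_ne_zero h2)
    rw [Ideal.zero_eq_bot, eq_bot_iff]
    refine (Ideal.pow_right_mono h1 _).trans ?_
    rw [← Ideal.map_pow, Ideal.map_quotient_self]
  let φ₀ := Algebra.FormallySmooth.liftOfSurjective f g hg hgn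
  have hφ₀ (r) : g (φ₀ r) = f r := Algebra.FormallySmooth.liftOfSurjective_apply f g hg hgn r
  choose q hq using fun r => Ideal.Quotient.mk_surjective (φ₀ r)
  refine ⟨(Ideal.Quotient.factor hlen).comp φ₀.toRingHom, q, fun r => ?_, fun r => ?_⟩
  · show _ = Ideal.Quotient.factor hlen (φ₀ r)
    rw [← hq]; rfl
  · rw [← Ideal.Quotient.eq]
    have := hφ₀ r
    rw [← hq] at this
    exact this

lemma jet_push {R Q Z : Type*} [CommRing R] [CommRing Q] [CommRing Z] (𝔛 : Ideal Q) (𝔜 : Ideal Z)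
    (n : ℕ) (φ : R →+* Q ⧸ 𝔛 ^ n) (q : R → Q) (hq : ∀ r, Ideal.Quotient.mk _ (q r) = φ r)
    (Ψ : Q →+* Z) (hΨ : 𝔛 ≤ 𝔜.comap Ψ) :
    ∃ θ : R →+* Z ⧸ 𝔜 ^ n, ∀ r, θ r = Ideal.Quotient.mk _ (Ψ (q r)) := by
  refine ⟨(Ideal.quotientMap (𝔜 ^ n) Ψ
    ((Ideal.pow_right_mono hΨ n).trans (Ideal.le_comap_pow Ψ n))).comp φ, fun r => ?_⟩
  rw [RingHom.comp_apply, ← hq, Ideal.quotientMap_mk]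

lemma congr_mul {B : Type*} [CommRing B] (𝔪 : Ideal B) {k l : ℕ} {x y x' y' : B}
    (h1 : x - y ∈ 𝔪 ^ (k + 1)) (h2 : y ∈ 𝔪 ^ k) (h1' : x' - y' ∈ 𝔪 ^ (l + 1)) (h2' : y' ∈ 𝔪 ^ l) :
    x * x' - y * y' ∈ 𝔪 ^ (k + l + 1) ∧ y * y' ∈ 𝔪 ^ (k + l) := by
  constructor
  · have hx' : x' ∈ 𝔪 ^ l := by
      have := add_mem (Ideal.pow_le_pow_right (Nat.le_succ l) h1') h2'
      simpa using this
    have : x * x' - y * y' = (x - y) * x' + y * (x' - y') := by ring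
    rw [this]
    refine add_mem ?_ ?_
    · have := Ideal.mul_mem_mul h1 hx'
      rwa [← pow_add, show k + 1 + l = k + l + 1 by ring] at this
    · have := Ideal.mul_mem_mul h2 h1'
      rwa [← pow_add, ← add_assoc] at this
  · rw [pow_add]; exact Ideal.mul_mem_mul h2 h2'

lemma congr_pow {B : Type*} [CommRing B] (𝔪 : Ideal B) {x y : B}
    (h1 : x - y ∈ 𝔪 ^ 2) (h2 : y ∈ 𝔪) (e : ℕ) :
    x ^ e - y ^ e ∈ 𝔪 ^ (e + 1) ∧ y ^ e ∈ 𝔪 ^ e := by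
  induction e with
  | zero => simp
  | succ e ih =>
    have := congr_mul 𝔪 (k := e) (l := 1) ih.1 ih.2 h1 (by simpa using h2)
    rwa [← pow_succ, ← pow_succ] at this

lemma congr_prod {B : Type*} [CommRing B] (𝔪 : Ideal B) {ι : Type*} (t : Finset ι) (x y : ι → B)
    (h1 : ∀ i, x i - y i ∈ 𝔪 ^ 2) (h2 : ∀ i, y i ∈ 𝔪) (e : ι → ℕ) :
    ∏ i ∈ t, x i ^ e i - ∏ i ∈ t, y i ^ e i ∈ 𝔪 ^ (∑ i ∈ t, e i + 1) ∧
      ∏ i ∈ t, y i ^ e i ∈ 𝔪 ^ (∑ i ∈ t, e i) := by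
  classical
  induction t using Finset.induction_on with
  | empty => simp
  | insert a t ha ih =>
    rw [Finset.prod_insert ha, Finset.prod_insert ha, Finset.sum_insert ha]
    have := congr_pow 𝔪 (h1 a) (h2 a) (e a)
    exact congr_mul 𝔪 this.1 this.2 ih.1 ih.2

/-- The main inductive argument: an element killed by a suitable truncated Taylor map is, up to a
multiplier outside `P`, in high powers of `P`. -/
theorem mem_pow_of_taylor {R L : Type*} [CommRing R] [Field L] [Algebra R L] (P : Ideal R)
    [hP : P.IsPrime] (hL : ∀ r, algebraMap R L r = 0 ↔ r ∈ P) {c n : ℕ} (z : Fin c → R)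
    (hz : ∀ i, z i ∈ P) (t : R) (ht : t ∉ P)
    (htP : ∀ x ∈ P, t * x ∈ Ideal.span (Set.range z) ⊔ P ^ 2)
    (𝔜 : Ideal (MvPolynomial (Fin c) L)) (h𝔜 : 𝔜 = idealOfVars (Fin c) L)
    (θ : R →+* MvPolynomial (Fin c) L ⧸ 𝔜 ^ n)
    (h1 : ∀ r, θ r - Ideal.Quotient.mk _ (C (algebraMap R L r)) ∈
      𝔜.map (Ideal.Quotient.mk _))
    (h2 : ∀ i, θ (z i) - Ideal.Quotient.mk _ (X i) ∈
      𝔜.map (Ideal.Quotient.mk _) ^ 2)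
    (f : R) (hf : θ f = 0) (m : ℕ) (hm : m ≤ n) : ∃ s ∉ P, s * f ∈ P ^ m := by
  classical
  induction m with
  | zero => exact ⟨1, fun h => hP.ne_top ((Ideal.eq_top_iff_one _).mpr h), by simp⟩
  | succ m ih =>
    obtain ⟨s, hs, hsf⟩ := ih (by omega)
    set π := Ideal.Quotient.mk (𝔜 ^ n)
    set 𝔪 := 𝔜.map π
    have htm : t ^ m * (s * f) ∈ Ideal.span (Set.range z) ^ m ⊔ P ^ (m + 1) := by
      have h3 : Ideal.span {t} * P ≤ Ideal.span (Set.range z) ⊔ P ^ 2 := by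
        rw [Ideal.span_singleton_mul_le_iff]
        exact htP
      have h4 : t ^ m * (s * f) ∈ (Ideal.span {t} * P) ^ m := by
        rw [mul_pow]
        exact Ideal.mul_mem_mul (Ideal.pow_mem_pow (Ideal.mem_span_singleton_self t) m) hsf
      have h5 := Ideal.pow_right_mono h3 m h4
      refine (show (Ideal.span (Set.range z) ⊔ P ^ 2) ^ m ≤ _ from ?_) h5
      have hzP : Ideal.span (Set.range z) ≤ P := by
        rw [Ideal.span_le]; rintro _ ⟨i, rfl⟩; exact hz i
      generalize Ideal.span (Set.range z) = J at hzP
      clear h5 h4 h3 hsf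
      clear hm ih
      induction m with
      | zero => simp
      | succ m ihm =>
        rw [pow_succ]
        refine (Ideal.mul_mono_left ihm).trans ?_
        rw [Ideal.mul_sup, Ideal.sup_mul, Ideal.sup_mul]
        refine sup_le (sup_le ?_ ?_) (sup_le ?_ ?_)
        · rw [← pow_succ]; exact le_sup_left
        · refine le_trans (Ideal.mul_mono_right hzP) ?_
          rw [← pow_succ]; exact le_sup_right
        · refine le_trans (Ideal.mul_mono_left (Ideal.pow_right_mono hzP m)) ?_
          rw [← pow_add]; exact le_sup_right
        · rw [← pow_add]; exact (Ideal.pow_le_pow_right (by omega)).trans le_sup_right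
    obtain ⟨w, hw, p, hp, hwp⟩ := Submodule.mem_sup.mp htm
    obtain ⟨F, hF, rfl⟩ := (Ideal.mem_span_pow_iff_exists_isHomogeneous z w).mp hw
    have hP𝔪 : P ≤ 𝔪.comap θ := by
      intro x hx
      have := h1 x
      rwa [(hL x).mpr hx, C_0, map_zero, sub_zero] at this
    have hpm : θ p ∈ 𝔪 ^ (m + 1) :=
      (Ideal.le_comap_pow θ (m + 1)) (Ideal.pow_right_mono hP𝔪 _ hp)
    have hXm (i) : π (X i) ∈ 𝔪 := Ideal.mem_map_of_mem _ (h𝔜 ▸ Ideal.subset_span ⟨i, rfl⟩)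
    have hFm : θ (eval z F) - π (map (algebraMap R L) F) ∈ 𝔪 ^ (m + 1) := by
      conv => enter [2, 1]; rw [eval_eq, map_sum]
      conv => enter [2, 2]; rw [F.as_sum, map_sum, map_sum]
      rw [← Finset.sum_sub_distrib]
      refine Ideal.sum_mem _ fun d hd => ?_
      have hdeg : ∑ i ∈ d.support, d i = m := by
        have := hF (mem_support_iff.mp hd)
        rw [← this]; exact DFunLike.congr_fun (Finsupp.degree_eq_weight_one (R := ℕ)) d
      have := congr_prod 𝔪 d.support (fun i => θ (z i)) (fun i => π (X i)) h2 hXm d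
      rw [hdeg] at this
      have h6 := congr_mul 𝔪 (k := 0) (by simpa using h1 (F.coeff d)) (by simp) this.1 this.2
      rw [zero_add] at h6
      convert h6.1 using 1
      rw [map_monomial, monomial_eq, Finsupp.prod]
      simp only [map_mul, map_prod, map_pow]
    have h0 : θ (eval z F) + θ p = 0 := by
      rw [← map_add, hwp, map_mul, map_mul, hf]; simp
    have h7 : π (map (algebraMap R L) F) ∈ 𝔪 ^ (m + 1) := by
      have : π (map (algebraMap R L) F) =
        -(θ (eval z F) - π (map (algebraMap R L) F)) - θ p := by
          linear_combination h0
      rw [this]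
      exact sub_mem (neg_mem hFm) hpm
    have h8 : map (algebraMap R L) F ∈ 𝔜 ^ (m + 1) := by
      rw [← Ideal.map_pow] at h7
      have := Ideal.mem_quotient_iff_mem_sup.mp h7
      rwa [sup_eq_left.mpr (Ideal.pow_le_pow_right hm)] at this
    rw [h𝔜, mem_pow_idealOfVars_iff'] at h8
    have h9 (d) : F.coeff d ∈ P := by
      by_cases hd : F.coeff d = 0
      · rw [hd]; exact zero_mem _
      have hdeg : d.degree = m := by
        have := hF hd
        rw [← this]; exact DFunLike.congr_fun (Finsupp.degree_eq_weight_one (R := ℕ)) d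
      have := h8 d (by omega)
      rw [coeff_map] at this
      exact (hL _).mp this
    have h10 : eval z F ∈ P ^ (m + 1) := by
      rw [eval_eq]
      refine Ideal.sum_mem _ fun d hd => ?_
      have hdeg : ∑ i ∈ d.support, d i = m := by
        have := hF (mem_support_iff.mp hd)
        rw [← this]; exact DFunLike.congr_fun (Finsupp.degree_eq_weight_one (R := ℕ)) d
      rw [pow_succ']
      refine Ideal.mul_mem_mul (h9 d) ?_
      rw [← hdeg, ← Finset.prod_pow_eq_pow_sum]
      exact Ideal.prod_mem_prod fun i _ => Ideal.pow_mem_pow (hz i) _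
    refine ⟨t ^ m * s, fun h => (hP.mem_or_mem h).elim (fun h => ht (hP.mem_of_pow_mem _ h)) hs, ?_⟩
    rw [mul_assoc, ← hwp]
    exact add_mem h10 hp

end Lifting
section Criterion
open KaehlerDifferential MvPolynomial IsLocalRing

theorem exists_params {R : Type*} [CommRing R] [IsNoetherianRing R] (P : Ideal R) [hP : P.IsPrime] :
    ∃ (c : ℕ) (z : Fin c → R), (∀ i, z i ∈ P) ∧
      (∀ a : Fin c → Localization.AtPrime P,
        ∑ i, a i * algebraMap R (Localization.AtPrime P) (z i) ∈
          maximalIdeal (Localization.AtPrime P) ^ 2 →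
        ∀ i, a i ∈ maximalIdeal (Localization.AtPrime P)) ∧
      ∃ t ∉ P, ∀ x ∈ P, t * x ∈ Ideal.span (Set.range z) ⊔ P ^ 2 := by
  classical
  set A := Localization.AtPrime P
  have : IsNoetherianRing A := IsLocalization.isNoetherianRing P.primeCompl _ inferInstance
  let L := ResidueField A
  have hsurj : Function.Surjective (algebraMap A L) := IsLocalRing.residue_surjective
  let b := Module.finBasis L (CotangentSpace A)
  set c := Module.finrank L (CotangentSpace A)
  have hmap : P.map (algebraMap R A) = maximalIdeal A := Localization.AtPrime.map_eq_maximalIdeal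
  have h1 : ∀ i, ∃ z ∈ P, ∃ u : A, IsUnit u ∧ ∃ y : maximalIdeal A,
      (maximalIdeal A).toCotangent y = b i ∧ algebraMap R A z = u * y := by
    intro i
    obtain ⟨y, hy⟩ := (maximalIdeal A).toCotangent_surjective (b i)
    have hym : (y : A) ∈ P.map (algebraMap R A) := by rw [hmap]; exact y.2
    rw [IsLocalization.mem_map_algebraMap_iff P.primeCompl] at hym
    obtain ⟨⟨a, s⟩, h⟩ := hym
    exact ⟨a, a.2, algebraMap R A s, IsLocalization.map_units A s, y, hy, by rw [← h, mul_comm]⟩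
  choose z hz u hu y hyb hzy using h1
  refine ⟨c, z, hz, ?_, ?_⟩
  · intro a ha
    have h2 : ∑ i, (algebraMap A L (a i * u i)) • b i = 0 := by
      have h3 : (maximalIdeal A).toCotangent (∑ i, (a i * u i) • y i) = 0 := by
        rw [Ideal.toCotangent_eq_zero]
        convert ha using 1
        simp only [AddSubmonoidClass.coe_finsetSum, Submodule.coe_smul, smul_eq_mul, mul_assoc]
        exact Finset.sum_congr rfl fun i _ => congrArg (a i * ·) (hzy i).symm
      rw [← h3, map_sum]
      refine Finset.sum_congr rfl fun i _ => ?_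
      rw [algebraMap_smul, map_smul, hyb]
    intro i
    have h4 := Fintype.linearIndependent_iff.mp b.linearIndependent _ h2 i
    have h5 : a i * u i ∈ maximalIdeal A := (IsLocalRing.residue_eq_zero_iff _).mp h4
    exact (Ideal.mul_unit_mem_iff_mem _ (hu i)).mp h5
  · apply exists_common_mul
    intro x hx
    rw [← mem_map_atPrime, Ideal.map_sup, Ideal.map_pow, hmap]
    have hxm : algebraMap R A x ∈ maximalIdeal A := hmap ▸ Ideal.mem_map_of_mem _ hx
    have h2 := b.sum_repr ((maximalIdeal A).toCotangent ⟨_, hxm⟩)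
    choose a ha using fun i => hsurj (b.repr ((maximalIdeal A).toCotangent ⟨_, hxm⟩) i)
    have h3 : (maximalIdeal A).toCotangent (⟨_, hxm⟩ - ∑ i, a i • y i) = 0 := by
      rw [map_sub, sub_eq_zero, map_sum]
      conv_lhs => rw [← h2]
      refine Finset.sum_congr rfl fun i _ => ?_
      rw [← ha, algebraMap_smul, map_smul, hyb]
    rw [Ideal.toCotangent_eq_zero] at h3
    have h4 : ∑ i, a i * (y i : A) ∈ (Ideal.span (Set.range z)).map (algebraMap R A) := by
      refine Ideal.sum_mem _ fun i _ => Ideal.mul_mem_left _ _ ?_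
      have : algebraMap R A (z i) ∈ (Ideal.span (Set.range z)).map (algebraMap R A) :=
        Ideal.mem_map_of_mem _ (Ideal.subset_span ⟨i, rfl⟩)
      rw [hzy] at this
      exact (Ideal.unit_mul_mem_iff_mem _ (hu i)).mp this
    refine Submodule.mem_sup.mpr ⟨_, h4, _, h3, ?_⟩
    simp
    rfl

/-- Differential criterion for membership in symbolic powers. -/
theorem exists_criterion (k R : Type*) [Field k] [PerfectField k] [CommRing R] [IsNoetherianRing R]
    [Algebra k R] [Algebra.FormallySmooth k R] (n : ℕ) (f : R) :
    ∃ E : Set R, ∀ (P : Ideal R) [P.IsPrime], (∃ s ∉ P, s * f ∈ P ^ n) ↔ E ⊆ P := by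
  classical
  obtain ⟨s, hs⟩ := Module.projective_def'.mp (inferInstance : Module.Projective R Ω[R⁄k])
  obtain ⟨φ, q, hq, hq2⟩ := exists_jet k R n s
  refine ⟨{x | ∃ d : Ω[R⁄k] →₀ ℕ, d.degree < n ∧ (q f).coeff d = x}, fun P hP => ?_⟩
  let L := P.ResidueField
  have hL (r : R) : algebraMap R L r = 0 ↔ r ∈ P := Ideal.algebraMap_residueField_eq_zero
  have hq1 (r) : q r - C r ∈ idealOfVars Ω[R⁄k] R := by
    have h1 := Ideal.pow_le_self two_ne_zero (hq2 r)
    have h2 : Finsupp.linearCombination R (X : _ → MvPolynomial Ω[R⁄k] R) (s (D k R r)) ∈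
        idealOfVars Ω[R⁄k] R := by
      rw [Finsupp.linearCombination_apply]
      refine Ideal.sum_mem _ fun w _ => ?_
      show s (D k R r) w • X w ∈ _
      rw [MvPolynomial.smul_eq_C_mul]
      exact Ideal.mul_mem_left _ _ (Ideal.subset_span ⟨w, rfl⟩)
    have := add_mem h1 h2
    convert this using 1
    ring
  have hcoeff : {x | ∃ d : Ω[R⁄k] →₀ ℕ, d.degree < n ∧ (q f).coeff d = x} ⊆ (P : Set R) ↔
      map (algebraMap R L) (q f) ∈ idealOfVars Ω[R⁄k] L ^ n := by
    rw [mem_pow_idealOfVars_iff']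
    constructor
    · intro h d hd
      rw [coeff_map, hL]
      exact h ⟨d, hd, rfl⟩
    · rintro h _ ⟨d, hd, rfl⟩
      have := h d hd
      rwa [coeff_map, hL] at this
  rw [hcoeff]
  constructor
  · rintro ⟨a, ha, haf⟩
    have hle : idealOfVars Ω[R⁄k] R ≤ (idealOfVars Ω[R⁄k] L).comap (map (algebraMap R L)) := by
      rw [Ideal.span_le]
      rintro _ ⟨w, rfl⟩
      show map (algebraMap R L) (X w) ∈ idealOfVars Ω[R⁄k] L
      rw [map_X]
      exact Ideal.subset_span ⟨w, rfl⟩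
    obtain ⟨θ, hθ⟩ := jet_push _ (idealOfVars Ω[R⁄k] L) n φ q hq (map (algebraMap R L)) hle
    set 𝔪 := (idealOfVars Ω[R⁄k] L).map (Ideal.Quotient.mk (idealOfVars Ω[R⁄k] L ^ n))
    have h𝔪 : 𝔪 ^ n = ⊥ := by
      rw [← Ideal.map_pow, Ideal.map_quotient_self]
    have h1 (r) : θ r - Ideal.Quotient.mk _ (C (algebraMap R L r)) ∈ 𝔪 := by
      have := Ideal.mem_map_of_mem (Ideal.Quotient.mk (idealOfVars Ω[R⁄k] L ^ n))
        (Ideal.mem_comap.mp (hle (hq1 r)))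
      rwa [map_sub, map_sub, map_C, ← hθ] at this
    have h2 : θ (a * f) = 0 := by
      have hP𝔪 : P ≤ 𝔪.comap θ := by
        intro x hx
        have := h1 x
        rwa [(hL x).mpr hx, C_0, map_zero, sub_zero] at this
      have := (Ideal.le_comap_pow θ n) (Ideal.pow_right_mono hP𝔪 _ haf)
      rw [h𝔪] at this
      exact this
    have h3 : IsUnit (θ a) := by
      have h4 : IsUnit (Ideal.Quotient.mk (idealOfVars Ω[R⁄k] L ^ n) (C (algebraMap R L a))) := by
        refine IsUnit.map _ (IsUnit.map _ (IsUnit.mk0 _ ?_))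
        rwa [Ne, hL]
      have h5 : IsNilpotent (θ a - Ideal.Quotient.mk _ (C (algebraMap R L a))) :=
        ⟨n, by
          have := Ideal.pow_mem_pow (h1 a) n
          rwa [h𝔪] at this⟩
      have := h5.isUnit_add_left_of_commute h4 (Commute.all _ _)
      rwa [add_sub_cancel] at this
    rw [map_mul] at h2
    have h6 : θ f = 0 := (h3.mul_right_eq_zero).mp h2
    rwa [hθ, Ideal.Quotient.eq_zero_iff_mem] at h6
  · intro hf
    obtain ⟨c, z, hz, hind, t, ht, htP⟩ := exists_params P
    obtain ⟨d, hd⟩ := exists_derivations k P z hz hind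
    let g : Ω[R⁄k] → MvPolynomial (Fin c) L := fun w =>
      ∑ j, C ((d j).liftKaehlerDifferential w) * X j
    let ψ : MvPolynomial Ω[R⁄k] L →+* MvPolynomial (Fin c) L := eval₂Hom C g
    have hψX (w) : ψ (X w) = g w := by simp [ψ]
    have hψC (x) : ψ (C x) = C x := by simp [ψ]
    have hgm (w) : g w ∈ idealOfVars (Fin c) L :=
      Ideal.sum_mem _ fun j _ => Ideal.mul_mem_left _ _ (Ideal.subset_span ⟨j, rfl⟩)
    have hψ : idealOfVars Ω[R⁄k] L ≤ (idealOfVars (Fin c) L).comap ψ := by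
      rw [Ideal.span_le]
      rintro _ ⟨w, rfl⟩
      show ψ (X w) ∈ idealOfVars (Fin c) L
      rw [hψX]
      exact hgm w
    let Ψ : MvPolynomial Ω[R⁄k] R →+* MvPolynomial (Fin c) L := ψ.comp (map (algebraMap R L))
    have hΨX (w) : Ψ (X w) = g w := by
      simp only [Ψ, RingHom.comp_apply, map_X, hψX]
    have hΨC (r) : Ψ (C r) = C (algebraMap R L r) := by
      simp only [Ψ, RingHom.comp_apply, map_C, hψC]
    have hΨ : idealOfVars Ω[R⁄k] R ≤ (idealOfVars (Fin c) L).comap Ψ := by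
      rw [Ideal.span_le]
      rintro _ ⟨w, rfl⟩
      show Ψ (X w) ∈ idealOfVars (Fin c) L
      rw [hΨX]
      exact hgm w
    have hΨT (w) : Ψ (Finsupp.linearCombination R (X : _ → MvPolynomial Ω[R⁄k] R) (s w)) = g w := by
      have h1 : Finsupp.linearCombination R id (s w) = w := LinearMap.congr_fun hs w
      rw [Finsupp.linearCombination_apply, Finsupp.sum, map_sum]
      conv_rhs => rw [← h1, Finsupp.linearCombination_apply, Finsupp.sum]
      simp only [g, map_sum, Finset.sum_mul]
      rw [Finset.sum_comm]
      refine Finset.sum_congr rfl fun v _ => ?_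
      rw [MvPolynomial.smul_eq_C_mul, map_mul, hΨX, hΨC, Finset.mul_sum]
      refine Finset.sum_congr rfl fun j _ => ?_
      rw [map_smul, id, Algebra.smul_def, C_mul, mul_assoc]
    obtain ⟨θ, hθ⟩ := jet_push _ (idealOfVars (Fin c) L) n φ q hq Ψ hΨ
    refine mem_pow_of_taylor P hL z hz t ht htP _ rfl θ ?_ ?_ f ?_ n le_rfl
    · intro r
      have := Ideal.mem_map_of_mem (Ideal.Quotient.mk (idealOfVars (Fin c) L ^ n))
        (Ideal.mem_comap.mp (hΨ (hq1 r)))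
      rwa [map_sub, map_sub, hΨC, ← hθ] at this
    · intro i
      have h1 : Ψ (q (z i) - (C (z i) + Finsupp.linearCombination R
          (X : _ → MvPolynomial Ω[R⁄k] R) (s (D k R (z i))))) ∈ idealOfVars (Fin c) L ^ 2 :=
        (Ideal.le_comap_pow Ψ 2) (Ideal.pow_right_mono hΨ 2 (hq2 (z i)))
      rw [map_sub, map_add, hΨC, hΨT, (hL _).mpr (hz i), C_0, zero_add] at h1
      have h2 : g (D k R (z i)) = X i := by
        simp only [g, Derivation.liftKaehlerDifferential_comp_D, hd]
        rw [Finset.sum_eq_single i]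
        · simp
        · intro j _ hj
          simp [hj.symm]
        · simp
      rw [h2] at h1
      have := Ideal.mem_map_of_mem (Ideal.Quotient.mk (idealOfVars (Fin c) L ^ n)) h1
      rwa [map_sub, ← hθ, Ideal.map_pow] at this
    · rw [hθ, Ideal.Quotient.eq_zero_iff_mem]
      exact (Ideal.le_comap_pow ψ n) (Ideal.pow_right_mono hψ n hf)

theorem main_of_formallySmooth (k K : Type*) {R : Type*} [Field k] [PerfectField k] [Field K]
    [CommRing R] [Algebra k K] [Algebra K R] [Algebra k R] [IsScalarTower k K R]
    (hfg : Algebra.FiniteType K R)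
    (hR : ∀ (m : Ideal R) [m.IsMaximal], IsRegularLocalRing (Localization.AtPrime m))
    (P : Ideal R) [hP : P.IsPrime] (n : ℕ) (f : R) :
    (∃ s ∉ P, s * f ∈ P ^ n) ↔ ∀ m : Ideal R, m.IsMaximal → P ≤ m → f ∈ m ^ n := by
  have hn : IsNoetherianRing R := Algebra.FiniteType.isNoetherianRing K R
  have hj : IsJacobsonRing R := isJacobsonRing_of_finiteType (A := K)
  have := formallySmooth_of_regular k K hfg hR
  obtain ⟨E, hE⟩ := exists_criterion k R n f
  have hmax (m : Ideal R) (hm : m.IsMaximal) : f ∈ m ^ n ↔ E ⊆ m := by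
    rw [← hE m]
    constructor
    · intro h
      exact ⟨1, fun h => hm.ne_top ((Ideal.eq_top_iff_one _).mpr h), by simpa using h⟩
    · rintro ⟨s, hs, hsf⟩
      rcases Nat.eq_zero_or_pos n with rfl | hn0
      · simp
      have hcop : IsCoprime (Ideal.span {s}) (m ^ n) := by
        apply IsCoprime.pow_right
        rw [Ideal.isCoprime_iff_sup_eq, sup_comm]
        exact hm.1.2 _ (left_lt_sup.mpr (by rwa [Ideal.span_singleton_le_iff_mem]))
      obtain ⟨a, ha, b, hb, hab⟩ := Ideal.isCoprime_iff_exists.mp hcop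
      obtain ⟨x, rfl⟩ := Ideal.mem_span_singleton'.mp ha
      have : f = x * (s * f) + f * b := by linear_combination (-f) * hab
      rw [this]
      exact add_mem (Ideal.mul_mem_left _ _ hsf) (Ideal.mul_mem_left _ _ hb)
  rw [hE P]
  constructor
  · intro h m hm hPm
    rw [hmax m hm]
    exact h.trans hPm
  · intro h x hx
    have h1 : P.jacobson = P := hj.out hP.isRadical
    rw [← h1]
    show x ∈ P.jacobson
    rw [Ideal.jacobson, Ideal.mem_sInf]
    rintro m ⟨hPm, hm⟩
    exact (hmax m hm).mp (h m hm hPm) hx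

end Criterion

end ZarMain

theorem ZarMain.main_aux {K R : Type*} (k : Type) [Field k] [PerfectField k] [Field K]
    [CommRing R] (i : k →+* K) [Algebra K R]
    (hfg : Algebra.FiniteType K R)
    (hR : ∀ (m : Ideal R) [m.IsMaximal], IsRegularLocalRing (Localization.AtPrime m))
    (P : Ideal R) [hP : P.IsPrime] (n : ℕ) (f : R) :
    (∃ s ∉ P, s * f ∈ P ^ n) ↔ ∀ m : Ideal R, m.IsMaximal → P ≤ m → f ∈ m ^ n := by
  letI : Algebra k K := i.toAlgebra
  letI : Algebra k R := ((algebraMap K R).comp i).toAlgebra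
  haveI : IsScalarTower k K R := IsScalarTower.of_algebraMap_eq fun _ => rfl
  exact ZarMain.main_of_formallySmooth k K hfg hR P n f

theorem ZarMain.main_aux2 {K R : Type*} [Field K] [CommRing R] [Algebra K R]
    (hfg : Algebra.FiniteType K R)
    (hR : ∀ (m : Ideal R) [m.IsMaximal], IsRegularLocalRing (Localization.AtPrime m))
    (P : Ideal R) [hP : P.IsPrime] (n : ℕ) (f : R) :
    (∃ s ∉ P, s * f ∈ P ^ n) ↔ ∀ m : Ideal R, m.IsMaximal → P ≤ m → f ∈ m ^ n := by
  obtain ⟨p, hp⟩ := CharP.exists K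
  rcases CharP.char_is_prime_or_zero K p with h | rfl
  · haveI : Fact p.Prime := ⟨h⟩
    exact ZarMain.main_aux (ZMod p) (ZMod.castHom dvd_rfl K) hfg hR P n f
  · haveI : CharZero K := CharP.charP_to_charZero K
    exact ZarMain.main_aux ℚ (algebraMap ℚ K) hfg hR P n f

/-- **Zariski's Main Lemma on Holomorphic Functions** (Zariski, Eisenbud–Hochster):
if `R` is a regular finitely generated algebra over a field `K`, then for every prime
ideal `𝔭` of `R` and every positive `n`,
`𝔭^{(n)} = ⋂_{𝔪 maximal, 𝔭 ⊆ 𝔪} 𝔪^n`. -/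
theorem symbolicPower_eq_iInf_pow_maximal {K R : Type*} [Field K] [CommRing R] [Algebra K R]
    (hfg : Algebra.FiniteType K R)
    (hreg : ∀ (q : Ideal R) (hq : q.IsPrime),
      haveI := hq
      IsRegularLocal (Localization.AtPrime q))
    (P : Ideal R) [P.IsPrime] (n : ℕ) (hn : 0 < n) :
    symbolicPower P n = ⨅ (m : Ideal R) (_ : m.IsMaximal) (_ : P ≤ m), m ^ n := by
  have hR : ∀ (m : Ideal R) [m.IsMaximal], IsRegularLocalRing (Localization.AtPrime m) := by
    intro m hm
    obtain ⟨hN, s, hs, hc⟩ := hreg m hm.isPrime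
    apply IsRegularLocalRing.of_spanFinrank_maximalIdeal_le
    have h1 : ((IsLocalRing.maximalIdeal (Localization.AtPrime m)).spanFinrank : WithBot ℕ∞) ≤
        (s.card : WithBot ℕ∞) :=
      Nat.cast_le.mpr (ZarMain.spanFinrank_le_of_span _ s hs)
    have h2 : (s.card : WithBot ℕ∞) = ringKrullDim (Localization.AtPrime m) := hc
    exact h1.trans h2.le
  ext f
  rw [symbolicPower, Ideal.mem_comap, ZarMain.mem_map_atPrime P (P ^ n) f]
  simp only [Submodule.mem_iInf]
  exact ZarMain.main_aux2 hfg hR P n f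
end
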